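/- arXiv:2110.14948 — 8 statements merged into one kernel-verified Lean document; each statement's English description precedes it below -/
import Mathlib

section
/- Let U be a finite set with |U| = n and w : U → (0,∞) a positive weight function with total weight W = Σ_{a∈U} w(a). Let a₁, …, a_m be i.i.d. proportional samples from U and for i ≠ j set Y_{ij} = 1/w(a_i) if a_i = a_j and Y_{ij} = 0 otherwise. Then for any pair of distinct indices i, j: E[Y_{ij}] = 1/W and Var(Y_{ij}) ≤ n/W². -/
open MeasureTheory ProbabilityTheory

/-- In a finite measure space, a set whose outer measure and that of its complement add up to at
most the total mass is null measurable. -/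
theorem nullMeasurableSet_of_measure_add_measure_compl_le
    {Ω : Type*} [MeasurableSpace Ω] {μ : Measure Ω} [IsFiniteMeasure μ] {s : Set Ω}
    (h : μ s + μ sᶜ ≤ μ Set.univ) : NullMeasurableSet s μ := by
  have hsub : (toMeasurable μ sᶜ)ᶜ ⊆ s := Set.compl_subset_comm.1 (subset_toMeasurable μ sᶜ)
  have hmeas : MeasurableSet (toMeasurable μ sᶜ)ᶜ := (measurableSet_toMeasurable μ sᶜ).compl
  have hle : μ s ≤ μ (toMeasurable μ sᶜ)ᶜ := by
    rw [measure_compl (measurableSet_toMeasurable μ sᶜ) (measure_ne_top _ _),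
      measure_toMeasurable]
    exact ENNReal.le_sub_of_add_le_right (measure_ne_top _ _) h
  exact hmeas.nullMeasurableSet.congr
    (ae_eq_of_subset_of_measure_ge hsub hle hmeas.nullMeasurableSet (measure_ne_top _ _))

/-- A map to a finite type is a.e. measurable as soon as the outer measures of its fibres add up to
at most the total mass. -/
theorem aemeasurable_of_sum_measure_fiber_le
    {Ω V : Type*} [MeasurableSpace Ω] {μ : Measure Ω} [IsFiniteMeasure μ]
    [Fintype V] [MeasurableSpace V] [MeasurableSingletonClass V] {T : Ω → V}
    (h : ∑ v, μ (T ⁻¹' {v}) ≤ μ Set.univ) : AEMeasurable T μ := by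
  classical
  have hfib : ∀ v, NullMeasurableSet (T ⁻¹' {v}) μ := fun v => by
    apply nullMeasurableSet_of_measure_add_measure_compl_le
    refine le_trans ?_ h
    rw [← Finset.add_sum_erase _ _ (Finset.mem_univ v)]
    gcongr
    refine (measure_mono fun ω hω => ?_).trans (measure_biUnion_finset_le _ _)
    simpa using hω
  refine NullMeasurable.aemeasurable fun s _ => ?_
  rw [← Set.biUnion_preimage_singleton]
  exact .biUnion s.to_countable fun v _ => hfib v

/-- Marginalising a product weight over the event that two given coordinates both equal `x`. -/
theorem sum_prod_mul_ite_eq_and_eq {ι U R : Type*} [Fintype ι] [DecidableEq ι] [Fintype U]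
    [DecidableEq U] [CommSemiring R] (p : U → R) (hp : ∑ u, p u = 1) {i j : ι} (hij : i ≠ j)
    (x : U) :
    ∑ v : ι → U, (∏ k, p (v k)) * (if v i = x ∧ v j = x then 1 else 0) = p x ^ 2 := by
  have hfactor : ∀ v : ι → U, (∏ k, p (v k)) * (if v i = x ∧ v j = x then 1 else 0)
      = ∏ k, p (v k) * (if k ∈ ({i, j} : Finset ι) then (if v k = x then 1 else 0) else 1) := by
    intro v
    rw [Finset.prod_mul_distrib, Finset.prod_ite_mem, Finset.univ_inter, Finset.prod_pair hij]
    by_cases hi : v i = x <;> simp [hi]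
  have hsum : ∀ k, ∑ u, p u * (if k ∈ ({i, j} : Finset ι) then (if u = x then 1 else 0) else 1)
      = if k ∈ ({i, j} : Finset ι) then p x else 1 := by
    intro k
    split_ifs <;> simp [hp]
  have hprod := Finset.prod_univ_sum (fun _ : ι => (Finset.univ : Finset U))
    (fun k u => p u * (if k ∈ ({i, j} : Finset ι) then (if u = x then 1 else 0) else 1))
  rw [Fintype.piFinset_univ] at hprod
  rw [Finset.sum_congr rfl fun v _ => hfactor v, ← hprod, Finset.prod_congr rfl fun k _ => hsum k,
    Finset.prod_ite_mem, Finset.univ_inter, Finset.prod_pair hij, sq]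

/-- If the finite-valued `a k` are jointly distributed as i.i.d. samples with weights `p`, then a
function of `a i` supported on a collision `a i = a j` is a.e. measurable and has the expected
integral. -/
theorem aemeasurable_and_integral_ite_collision {Ω U ι : Type*} [MeasurableSpace Ω]
    {μ : Measure Ω} [IsProbabilityMeasure μ] [Fintype ι] [Fintype U] [DecidableEq U]
    {p : U → ℝ} (hp₀ : ∀ u, 0 ≤ p u) (hp : ∑ u, p u = 1) {a : ι → Ω → U}
    (hlaw : ∀ v : ι → U, μ {ω | ∀ k, a k ω = v k} = ∏ k, ENNReal.ofReal (p (v k)))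
    {i j : ι} (hij : i ≠ j) (g : U → ℝ) :
    AEMeasurable (fun ω => if a i ω = a j ω then g (a i ω) else 0) μ ∧
      ∫ ω, (if a i ω = a j ω then g (a i ω) else 0) ∂μ = ∑ x, p x ^ 2 * g x := by
  classical
  let _ : MeasurableSpace (ι → U) := ⊤
  have : MeasurableSingletonClass (ι → U) := ⟨fun _ => trivial⟩
  let T : Ω → ι → U := fun ω k => a k ω
  have hfib : ∀ v, μ (T ⁻¹' {v}) = ENNReal.ofReal (∏ k, p (v k)) := fun v => by
    rw [ENNReal.ofReal_prod_of_nonneg fun k _ => hp₀ _, ← hlaw v]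
    congr 1
    ext ω
    simp [T, funext_iff]
  have htotal : ∑ v : ι → U, ∏ k, p (v k) = 1 := by
    have h := Finset.prod_univ_sum (fun _ : ι => (Finset.univ : Finset U)) (fun _ u => p u)
    rw [Fintype.piFinset_univ] at h
    simp [← h, hp]
  have hT : AEMeasurable T μ := by
    apply aemeasurable_of_sum_measure_fiber_le
    rw [Finset.sum_congr rfl fun v _ => hfib v,
      ← ENNReal.ofReal_sum_of_nonneg fun v _ => Finset.prod_nonneg fun k _ => hp₀ _, htotal]
    simp
  let f : (ι → U) → ℝ := fun v => if v i = v j then g (v i) else 0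
  have hf : Measurable f := measurable_from_top
  refine ⟨hf.comp_aemeasurable hT, ?_⟩
  have : IsProbabilityMeasure (μ.map T) := Measure.isProbabilityMeasure_map hT
  have hexpand : ∀ v, f v = ∑ x, (if v i = x ∧ v j = x then 1 else 0) * g x := fun v => by
    simp [f, ite_and, eq_comm (a := v j)]
  calc ∫ ω, f (T ω) ∂μ = ∫ v, f v ∂(μ.map T) :=
        (integral_map hT hf.aestronglyMeasurable).symm
    _ = ∑ v, (∏ k, p (v k)) * f v := by
        rw [integral_fintype .of_finite]
        refine Finset.sum_congr rfl fun v _ => ?_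
        rw [measureReal_def, Measure.map_apply_of_aemeasurable hT (measurableSet_singleton v),
          hfib, ENNReal.toReal_ofReal (Finset.prod_nonneg fun k _ => hp₀ _), smul_eq_mul]
    _ = ∑ x, p x ^ 2 * g x := by
        simp_rw [hexpand, Finset.mul_sum, ← mul_assoc]
        rw [Finset.sum_comm]
        simp_rw [← Finset.sum_mul, sum_prod_mul_ite_eq_and_eq p hp hij]

/-- For i.i.d. proportional samples `a₁, …, a_m` from a finite weighted set
`(U, w)` with total weight `W`, and `Y_{ij} = 1/w(a_i)` if `a_i = a_j`, `0` otherwise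
(`i ≠ j`), one has `E[Y_{ij}] = 1/W` and `Var(Y_{ij}) ≤ n/W²`. -/
theorem expectation_variance_pair_estimator
    {Ω U : Type*} [MeasurableSpace Ω] (μ : Measure Ω) [IsProbabilityMeasure μ]
    [Fintype U] [DecidableEq U]
    (n : ℕ) (hn : Fintype.card U = n)
    (w : U → ℝ) (hw : ∀ x, 0 < w x)
    (W : ℝ) (hW : W = ∑ x, w x)
    (m : ℕ) (a : Fin m → Ω → U)
    (hlaw : ∀ v : Fin m → U,
      μ {ω | ∀ i, a i ω = v i} = ∏ i, ENNReal.ofReal (w (v i) / W))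
    (i j : Fin m) (hij : i ≠ j)
    (Y : Ω → ℝ)
    (hY : ∀ ω, Y ω = if a i ω = a j ω then (w (a i ω))⁻¹ else 0) :
    ∫ ω, Y ω ∂μ = W⁻¹ ∧ variance Y μ ≤ n / W ^ 2 := by
  obtain ⟨ω₀⟩ : Nonempty Ω := μ.nonempty_of_neZero
  have hWpos : 0 < W := hW ▸ Finset.sum_pos (fun x _ => hw x) ⟨a i ω₀, Finset.mem_univ _⟩
  have hW₀ : W ≠ 0 := hWpos.ne'
  have hp₀ : ∀ x, 0 ≤ w x / W := fun x => (div_pos (hw x) hWpos).le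
  have hp : ∑ x, w x / W = 1 := by rw [← Finset.sum_div, ← hW, div_self hW₀]
  obtain rfl : Y = fun ω => if a i ω = a j ω then (w (a i ω))⁻¹ else 0 := funext hY
  obtain ⟨hmeas, hmean⟩ :=
    aemeasurable_and_integral_ite_collision hp₀ hp hlaw hij fun x => (w x)⁻¹
  have hsq := (aemeasurable_and_integral_ite_collision hp₀ hp hlaw hij fun x => (w x)⁻¹ ^ 2).2
  constructor
  · rw [hmean]
    have hterm : ∀ x, (w x / W) ^ 2 * (w x)⁻¹ = w x / W * W⁻¹ := fun x => by
      have := (hw x).ne'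
      field_simp
    simp_rw [hterm]
    rw [← Finset.sum_mul, hp, one_mul]
  · refine (variance_le_expectation_sq hmeas.aestronglyMeasurable).trans_eq ?_
    have hterm : ∀ x, (w x / W) ^ 2 * (w x)⁻¹ ^ 2 = (W ^ 2)⁻¹ := fun x => by
      have := (hw x).ne'
      field_simp
    simp_rw [hterm] at hsq
    simp only [Pi.pow_apply, ite_pow, ne_eq, OfNat.ofNat_ne_zero, not_false_eq_true, zero_pow, hsq]
    simp [hn, div_eq_mul_inv]
end

section
/- Let U be a finite set with |U| = n and w : U → (0,∞) a positive weight function with total weight W = Σ_{a∈U} w(a). Let a₁, …, a_m be i.i.d. proportional samples and for i ≠ j set Y_{ij} = 1/w(a_i) if a_i = a_j and Y_{ij} = 0 otherwise. Then for pairwise distinct indices i, j, k: E[Y_{ij}·Y_{ik}] = 1/W², and consequently Cov(Y_{ij}, Y_{ik}) = 0. -/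
open MeasureTheory ProbabilityTheory

/-- The fibers of a map to a finite type are null-measurable as soon as their outer measures
add up to at most the total mass. -/
theorem nullMeasurableSet_fiber_of_sum_le {Ω V : Type*} [MeasurableSpace Ω]
    {μ : Measure Ω} [IsFiniteMeasure μ] [Fintype V] {f : Ω → V}
    (h : ∑ v, μ {ω | f ω = v} ≤ μ Set.univ) (v : V) :
    NullMeasurableSet {ω | f ω = v} μ := by
  classical
  refine nullMeasurableSet_of_measure_add_measure_compl_le (le_trans ?_ h)
  rw [← Finset.add_sum_erase _ _ (Finset.mem_univ v)]
  gcongr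
  refine le_trans (measure_mono fun ω hω => ?_)
    (measure_biUnion_finset_le (Finset.univ.erase v) fun v => {ω | f ω = v})
  simpa using hω

/-- The expectation of a function of a finitely valued map with null-measurable fibers. -/
theorem integral_comp_eq_sum_fiber {Ω V : Type*} [MeasurableSpace Ω]
    {μ : Measure Ω} [IsFiniteMeasure μ] [Fintype V] {f : Ω → V}
    (h : ∀ v, NullMeasurableSet {ω | f ω = v} μ) (g : V → ℝ) :
    ∫ ω, g (f ω) ∂μ = ∑ v, μ.real {ω | f ω = v} * g v := by
  classical
  have hg : ∀ ω, g (f ω) = ∑ v, {ω | f ω = v}.indicator (fun _ => g v) ω := fun ω => by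
    simp [Set.indicator_apply]
  simp_rw [hg]
  rw [integral_finsetSum _ fun v _ => (integrable_const (g v)).indicator₀ (h v)]
  refine Finset.sum_congr rfl fun v _ => ?_
  rw [integral_indicator₀ (h v), setIntegral_const, smul_eq_mul]

/-- Under a product weight of total mass one, the coordinates in `S` all equal `x` with
probability `p x ^ #S`. -/
theorem sum_prod_mul_ite_forall_eq {ι U : Type*} [Fintype ι] [DecidableEq ι] [Fintype U]
    [DecidableEq U] {p : U → ℝ} (hp : ∑ x, p x = 1) (S : Finset ι) (x : U) :
    ∑ v : ι → U, (∏ l, p (v l)) * (if ∀ l ∈ S, v l = x then 1 else 0) = p x ^ S.card := by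
  have hfactor : ∀ v : ι → U, (∏ l, p (v l)) * (if ∀ l ∈ S, v l = x then 1 else 0) =
      ∏ l, p (v l) * (if l ∈ S → v l = x then 1 else 0) := fun v => by
    rw [Finset.prod_mul_distrib, Finset.prod_ite_zero]
    simp
  have hmarginal : ∀ l, ∑ y, p y * (if l ∈ S → y = x then 1 else 0) =
      if l ∈ S then p x else 1 := fun l => by
    by_cases hl : l ∈ S <;> simp [hl, hp]
  simp_rw [hfactor]
  rw [← Fintype.prod_sum fun l y => p y * (if l ∈ S → y = x then 1 else 0)]
  simp_rw [hmarginal]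
  simp

/-- For i.i.d. samples with law `p`, the expectation of a weight `c (a i)` collected when all
samples indexed by `S ∋ i` agree. -/
theorem integral_ite_forall_eq {Ω ι U : Type*} [MeasurableSpace Ω] {μ : Measure Ω}
    [IsProbabilityMeasure μ] [Fintype ι] [DecidableEq ι] [Fintype U] [DecidableEq U]
    {p : U → ℝ} (hp_nonneg : ∀ x, 0 ≤ p x) (hp : ∑ x, p x = 1) {a : ι → Ω → U}
    (hlaw : ∀ v : ι → U, μ {ω | ∀ i, a i ω = v i} = ∏ i, ENNReal.ofReal (p (v i)))
    {S : Finset ι} {i : ι} (hi : i ∈ S) (c : U → ℝ) {Z : Ω → ℝ}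
    (hZ : ∀ ω, Z ω = if ∀ l ∈ S, a l ω = a i ω then c (a i ω) else 0) :
    ∫ ω, Z ω ∂μ = ∑ x, c x * p x ^ S.card := by
  have hZ_sum : ∀ ω, Z ω = ∑ x, c x * (if ∀ l ∈ S, a l ω = x then 1 else 0) := fun ω => by
    rw [hZ, Finset.sum_eq_single (a i ω) _ (by simp)]
    · simp
    · intro x _ hx
      rw [if_neg fun h => hx (h i hi).symm, mul_zero]
  have hfiber : ∀ v : ι → U, μ {ω | (fun i => a i ω) = v} = ENNReal.ofReal (∏ i, p (v i)) :=
    fun v => by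
      rw [ENNReal.ofReal_prod_of_nonneg fun i _ => hp_nonneg (v i), ← hlaw]
      simp only [funext_iff]
  have hnull := nullMeasurableSet_fiber_of_sum_le (μ := μ) (f := fun ω i => a i ω) <| by
    simp_rw [hfiber]
    rw [← ENNReal.ofReal_sum_of_nonneg fun v _ => Finset.prod_nonneg fun i _ => hp_nonneg (v i),
      ← Fintype.prod_sum fun _ y => p y]
    simp [hp]
  simp_rw [hZ_sum]
  rw [integral_comp_eq_sum_fiber hnull
    fun v => ∑ x, c x * (if ∀ l ∈ S, v l = x then 1 else 0)]
  simp_rw [Measure.real, hfiber,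
    ENNReal.toReal_ofReal (Finset.prod_nonneg fun i _ => hp_nonneg _), Finset.mul_sum]
  rw [Finset.sum_comm]
  refine Finset.sum_congr rfl fun x _ => ?_
  rw [← sum_prod_mul_ite_forall_eq hp S x, Finset.mul_sum]
  exact Finset.sum_congr rfl fun v _ => by ring

/-- For i.i.d. proportional samples and pairwise distinct indices `i, j, k`,
the estimators `Y_{ij}` and `Y_{ik}` satisfy `E[Y_{ij}·Y_{ik}] = 1/W²`, and consequently
their covariance `E[Y_{ij}·Y_{ik}] − E[Y_{ij}]·E[Y_{ik}]` vanishes. -/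
theorem pair_estimators_uncorrelated
    {Ω U : Type*} [MeasurableSpace Ω] (μ : Measure Ω) [IsProbabilityMeasure μ]
    [Fintype U] [DecidableEq U]
    (n : ℕ) (hn : Fintype.card U = n)
    (w : U → ℝ) (hw : ∀ x, 0 < w x)
    (W : ℝ) (hW : W = ∑ x, w x)
    (m : ℕ) (a : Fin m → Ω → U)
    (hlaw : ∀ v : Fin m → U,
      μ {ω | ∀ i, a i ω = v i} = ∏ i, ENNReal.ofReal (w (v i) / W))
    (i j k : Fin m) (hij : i ≠ j) (hik : i ≠ k) (hjk : j ≠ k)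
    (Yij Yik : Ω → ℝ)
    (hYij : ∀ ω, Yij ω = if a i ω = a j ω then (w (a i ω))⁻¹ else 0)
    (hYik : ∀ ω, Yik ω = if a i ω = a k ω then (w (a i ω))⁻¹ else 0) :
    ∫ ω, Yij ω * Yik ω ∂μ = (W ^ 2)⁻¹ ∧
      ∫ ω, Yij ω * Yik ω ∂μ - (∫ ω, Yij ω ∂μ) * (∫ ω, Yik ω ∂μ) = 0 := by
  obtain ⟨ω₀⟩ : Nonempty Ω := nonempty_of_isProbabilityMeasure μ
  have hWpos : 0 < W := hW ▸ Finset.sum_pos (fun x _ => hw x) ⟨a i ω₀, Finset.mem_univ _⟩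
  have hW0 : W ≠ 0 := hWpos.ne'
  have hp : ∑ x, w x / W = 1 := by rw [← Finset.sum_div, ← hW, div_self hW0]
  have hp_nonneg : ∀ x, 0 ≤ w x / W := fun x => (div_pos (hw x) hWpos).le
  have hpair : ∀ l, i ≠ l →
      ∫ ω, (if a i ω = a l ω then (w (a i ω))⁻¹ else 0) ∂μ = W⁻¹ := fun l hil => by
    rw [integral_ite_forall_eq hp_nonneg hp hlaw (Finset.mem_insert_self i {l})
      (fun x => (w x)⁻¹) fun ω => by simp [eq_comm (a := a l ω)], Finset.card_pair hil]
    have hterm : ∀ x, (w x)⁻¹ * (w x / W) ^ 2 = w x / W ^ 2 := fun x => by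
      have := (hw x).ne'
      field_simp
    simp_rw [hterm]
    rw [← Finset.sum_div, ← hW]
    field_simp
  have hprod : ∫ ω, Yij ω * Yik ω ∂μ = (W ^ 2)⁻¹ := by
    rw [integral_ite_forall_eq hp_nonneg hp hlaw (Finset.mem_insert_self i {j, k})
      (fun x => (w x)⁻¹ * (w x)⁻¹) fun ω => by
        rw [hYij, hYik, ite_zero_mul_ite_zero]
        simp [eq_comm (a := a i ω)],
      Finset.card_eq_three.mpr ⟨i, j, k, hij, hik, hjk, rfl⟩]
    have hterm : ∀ x, ((w x)⁻¹ * (w x)⁻¹) * (w x / W) ^ 3 = w x / W ^ 3 := fun x => by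
      have := (hw x).ne'
      field_simp
    simp_rw [hterm]
    rw [← Finset.sum_div, ← hW]
    field_simp
  refine ⟨hprod, ?_⟩
  rw [hprod]
  simp_rw [hYij, hYik]
  rw [hpair j hij, hpair k hik]
  ring
end

section
/- Let U be a finite set with |U| = n and w : U → (0,∞) a positive weight function with total weight W = Σ_{a∈U} w(a). Let 0 < ε < 1 and ñ ≥ n, and let m be an integer with m ≥ √(24·ñ)/ε + 1. Let a₁, …, a_m be i.i.d. proportional samples and define the estimate Ŵ = C(m,2) · (Σ_{1 ≤ i < j ≤ m} Y_{ij})^{-1}, where Y_{ij} = 1/w(a_i) if a_i = a_j and Y_{ij} = 0 otherwise (with Ŵ = ∞ if the sum is zero). Then P(|Ŵ − W| ≤ ε·W) ≥ 2/3. -/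
open MeasureTheory ProbabilityTheory

/-- Resampling one coordinate of an i.i.d. family does not change an expectation. -/
lemma sum_prod_mul_eq_sum_prod_mul_update {ι U : Type*} [Fintype ι] [DecidableEq ι] [Fintype U]
    (p : U → ℝ) (hp : ∑ x, p x = 1) (f : (ι → U) → ℝ) (i : ι) :
    ∑ v : ι → U, (∏ k, p (v k)) * f v =
      ∑ v : ι → U, (∏ k, p (v k)) * ∑ x, p x * f (Function.update v i x) := by
  have swap (v : ι → U) (x : U) :
      (∏ k, p (Function.update v i x k)) * p (v i) = (∏ k, p (v k)) * p x := by
    rw [← Finset.mul_prod_erase _ _ (Finset.mem_univ i),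
      ← Finset.mul_prod_erase _ (fun k => p (v k)) (Finset.mem_univ i),
      Finset.prod_congr rfl (fun k hk => by
        rw [Function.update_of_ne (Finset.ne_of_mem_erase hk)]), Function.update_self]
    ring
  calc ∑ v : ι → U, (∏ k, p (v k)) * f v
      = ∑ q : (ι → U) × U, (∏ k, p (q.1 k)) * p q.2 * f q.1 := by
        simp [Fintype.sum_prod_type, ← Finset.mul_sum, ← Finset.sum_mul, hp]
    _ = ∑ q : (ι → U) × U,
          (∏ k, p (q.1 k)) * p q.2 * f (Function.update q.1 i q.2) := by
        refine Finset.sum_bij' (fun q _ => (Function.update q.1 i q.2, q.1 i))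
          (fun q _ => (Function.update q.1 i q.2, q.1 i)) ?_ ?_ ?_ ?_ ?_
        · simp
        · simp
        · simp
        · simp
        · intro q _
          simp [swap]
    _ = _ := by
        simp [Fintype.sum_prod_type, Finset.mul_sum, mul_assoc]

/-- The indicator of a collision of coordinates `i`, `j`, weighted by `1 / w` and centered at its
mean `1 / W` under proportional sampling. -/
noncomputable def centeredCollision {ι U : Type*} [DecidableEq U] (w : U → ℝ) (W : ℝ) (i j : ι)
    (v : ι → U) : ℝ :=
  (if v i = v j then (w (v i))⁻¹ else 0) - W⁻¹

lemma centeredCollision_comm {ι U : Type*} [DecidableEq U] (w : U → ℝ) (W : ℝ) (i j : ι)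
    (v : ι → U) : centeredCollision w W i j v = centeredCollision w W j i v := by
  unfold centeredCollision
  by_cases h : v i = v j
  · simp [h]
  · simp [h, Ne.symm h]

lemma centeredCollision_update_of_ne {ι U : Type*} [DecidableEq ι] [DecidableEq U] {w : U → ℝ}
    {W : ℝ} {i j k : ι} (hi : i ≠ k) (hj : j ≠ k) (v : ι → U) (x : U) :
    centeredCollision w W i j (Function.update v k x) = centeredCollision w W i j v := by
  simp [centeredCollision, hi, hj]

lemma sum_div_eq_one {U : Type*} [Fintype U] {w : U → ℝ} {W : ℝ} (hW : W = ∑ x, w x)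
    (hW0 : 0 < W) : ∑ x, w x / W = 1 := by
  rw [← Finset.sum_div, ← hW, div_self hW0.ne']

section ProportionalSampling

variable {ι U : Type*} [DecidableEq ι] [Fintype U] [DecidableEq U]
  {w : U → ℝ} {W : ℝ}

lemma sum_mul_centeredCollision_update (hw : ∀ x, 0 < w x) (hW : W = ∑ x, w x) (hW0 : 0 < W)
    {i j : ι} (hij : i ≠ j) (v : ι → U) :
    ∑ x, w x / W * centeredCollision w W i j (Function.update v i x) = 0 := by
  have hne := (hw (v j)).ne'
  simp only [centeredCollision, Function.update_self, Function.update_of_ne hij.symm, mul_sub,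
    Finset.sum_sub_distrib, ← Finset.sum_mul, sum_div_eq_one hW hW0, mul_ite, mul_zero,
    Finset.sum_ite_eq', Finset.mem_univ, if_true]
  field_simp
  simp

lemma sum_mul_centeredCollision_update_sq_le (hw : ∀ x, 0 < w x) (hW : W = ∑ x, w x)
    (hW0 : 0 < W) {i j : ι} (hij : i ≠ j) (v : ι → U) :
    ∑ x, w x / W * centeredCollision w W i j (Function.update v i x) ^ 2 ≤
      (W * w (v j))⁻¹ := by
  have hne := (hw (v j)).ne'
  have expand (x : U) : w x / W * centeredCollision w W i j (Function.update v i x) ^ 2 =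
      (if x = v j then (W * w x)⁻¹ - 2 * (W ^ 2)⁻¹ else 0) + w x / W * (W ^ 2)⁻¹ := by
    have hx := (hw x).ne'
    simp only [centeredCollision, Function.update_self, Function.update_of_ne hij.symm]
    split_ifs
    · field_simp
      ring
    · field_simp
      ring
  simp only [expand, Finset.sum_add_distrib, ← Finset.sum_mul, sum_div_eq_one hW hW0,
    Finset.sum_ite_eq', Finset.mem_univ, if_true]
  have : 0 < (W ^ 2)⁻¹ := by positivity
  linarith

variable [Fintype ι]

lemma sum_prod_mul_centeredCollision_mul_eq_zero (hw : ∀ x, 0 < w x) (hW : W = ∑ x, w x)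
    (hW0 : 0 < W) {i j k l : ι} (hij : i ≠ j) (hk : k ≠ i) (hl : l ≠ i) :
    ∑ v : ι → U, (∏ t, w (v t) / W) *
      (centeredCollision w W i j v * centeredCollision w W k l v) = 0 := by
  rw [sum_prod_mul_eq_sum_prod_mul_update (fun x => w x / W) (sum_div_eq_one hW hW0) _ i]
  refine Finset.sum_eq_zero fun v _ => ?_
  simp only [centeredCollision_update_of_ne hk hl, ← mul_assoc]
  rw [← Finset.sum_mul, sum_mul_centeredCollision_update hw hW hW0 hij]
  simp

lemma sum_prod_mul_centeredCollision_sq_le (hw : ∀ x, 0 < w x) (hW : W = ∑ x, w x)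
    (hW0 : 0 < W) {i j : ι} (hij : i ≠ j) :
    ∑ v : ι → U, (∏ t, w (v t) / W) * centeredCollision w W i j v ^ 2 ≤
      Fintype.card U / W ^ 2 := by
  have hp := sum_div_eq_one hW hW0
  have hpos (v : ι → U) : 0 ≤ ∏ t, w (v t) / W :=
    Finset.prod_nonneg fun t _ => (div_pos (hw _) hW0).le
  rw [sum_prod_mul_eq_sum_prod_mul_update (fun x => w x / W) hp _ i]
  refine (Finset.sum_le_sum fun v _ => mul_le_mul_of_nonneg_left
    (sum_mul_centeredCollision_update_sq_le hw hW hW0 hij v) (hpos v)).trans_eq ?_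
  rw [sum_prod_mul_eq_sum_prod_mul_update (fun x => w x / W) hp (fun v => (W * w (v j))⁻¹) j]
  have hterm (x : U) : w x / W * (W * w x)⁻¹ = (W ^ 2)⁻¹ := by
    have hx := (hw x).ne'
    field_simp
  have htotal : ∑ v : ι → U, ∏ t, w (v t) / W = 1 := by
    have h := Finset.prod_univ_sum (fun _ : ι => Finset.univ) (fun _ x => w x / W)
    simpa [hp] using h.symm
  simp only [Function.update_self, hterm, ← Finset.sum_mul, htotal]
  simp [div_eq_mul_inv]

/-- Distinct pairs have uncorrelated collisions, so the variance of the total collision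
weight is at most the sum of the second moments. -/
lemma sum_prod_mul_sum_centeredCollision_sq_le [LinearOrder ι] (hw : ∀ x, 0 < w x)
    (hW : W = ∑ x, w x) (hW0 : 0 < W) (T : Finset (Σ _ : ι, ι)) (hT : ∀ q ∈ T, q.1 < q.2) :
    ∑ v : ι → U, (∏ t, w (v t) / W) * (∑ q ∈ T, centeredCollision w W q.1 q.2 v) ^ 2 ≤
      T.card * (Fintype.card U / W ^ 2) := by
  have cross (q r) (hq : q ∈ T) (hr : r ∈ T) (hqr : r ≠ q) :
      ∑ v : ι → U, (∏ t, w (v t) / W) *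
        (centeredCollision w W q.1 q.2 v * centeredCollision w W r.1 r.2 v) = 0 := by
    obtain ⟨i, j⟩ := q
    obtain ⟨k, l⟩ := r
    have hij : i < j := hT _ hq
    have hkl : k < l := hT _ hr
    by_cases h : k ≠ i ∧ l ≠ i
    · exact sum_prod_mul_centeredCollision_mul_eq_zero hw hW hW0 hij.ne h.1 h.2
    · simp only [centeredCollision_comm w W i j]
      refine sum_prod_mul_centeredCollision_mul_eq_zero hw hW hW0 hij.ne' ?_ ?_
      · rintro rfl
        exact h ⟨hij.ne', (hij.trans hkl).ne'⟩
      · rintro rfl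
        refine h ⟨?_, hij.ne'⟩
        rintro rfl
        exact hqr rfl
  calc _ = ∑ q ∈ T, ∑ r ∈ T, ∑ v : ι → U, (∏ t, w (v t) / W) *
        (centeredCollision w W q.1 q.2 v * centeredCollision w W r.1 r.2 v) := by
        simp_rw [sq, Finset.sum_mul_sum, Finset.mul_sum]
        rw [Finset.sum_comm]
        exact Finset.sum_congr rfl fun q _ => Finset.sum_comm
    _ = ∑ q ∈ T, ∑ v : ι → U, (∏ t, w (v t) / W) * centeredCollision w W q.1 q.2 v ^ 2 := by
        refine Finset.sum_congr rfl fun q hq => ?_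
        rw [Finset.sum_eq_single_of_mem q hq fun r hr hrq => cross q r hq hr hrq]
        simp_rw [sq]
    _ ≤ ∑ q ∈ T, (Fintype.card U / W ^ 2 : ℝ) :=
        Finset.sum_le_sum fun q hq => sum_prod_mul_centeredCollision_sq_le hw hW hW0 (hT q hq).ne
    _ = _ := by simp

end ProportionalSampling

lemma card_univ_sigma_Ioi (m : ℕ) :
    ((Finset.univ : Finset (Fin m)).sigma fun i => Finset.Ioi i).card = m.choose 2 := by
  rw [Finset.card_sigma]
  simp only [Fin.card_Ioi]
  rw [Fin.sum_univ_eq_sum_range (fun i => m - 1 - i) m, Finset.sum_range_reflect (fun i => i) m,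
    Finset.sum_range_id, Nat.choose_two_right]

/-- If `S` is close to `C / W`, then `C / S` is close to `W`. -/
lemma abs_mul_inv_sub_le {C S W ε : ℝ} (hC : 0 < C) (hW : 0 < W) (hε0 : 0 < ε) (hε1 : ε < 1)
    (h : |S - C * W⁻¹| ≤ ε * C / (2 * W)) : |C * S⁻¹ - W| ≤ ε * W := by
  have hCW : |S * W - C| ≤ ε * C / 2 := by
    rw [show S * W - C = (S - C * W⁻¹) * W by field_simp, abs_mul, abs_of_pos hW,
      show ε * C / 2 = ε * C / (2 * W) * W by field_simp]
    exact mul_le_mul_of_nonneg_right h hW.le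
  rw [abs_le] at hCW
  have hS : 0 < S := by
    refine pos_of_mul_pos_left (b := W) ?_ hW.le
    nlinarith
  have hεC : 0 < ε * C := mul_pos hε0 hC
  rw [← div_eq_mul_inv, abs_le, le_sub_iff_add_le, sub_le_iff_le_add, div_le_iff₀ hS,
    le_div_iff₀ hS]
  constructor
  · nlinarith
  · nlinarith

/-- Finite Chebyshev inequality, without any measurability of the random variable `X`. -/
lemma measure_lt_abs_le_of_law {Ω V : Type*} [MeasurableSpace Ω] [Fintype V] (μ : Measure Ω)
    (X : Ω → V) (P : V → ℝ) (hP : ∀ v, 0 ≤ P v)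
    (hX : ∀ v, μ {ω | X ω = v} = ENNReal.ofReal (P v)) (f : V → ℝ) {δ : ℝ} (hδ : 0 < δ) :
    μ {ω | δ < |f (X ω)|} ≤ ENNReal.ofReal ((∑ v, P v * f v ^ 2) / δ ^ 2) := by
  classical
  have hsub : {ω | δ < |f (X ω)|} ⊆
      ⋃ v ∈ Finset.univ.filter (fun v => δ < |f v|), {ω | X ω = v} := by
    intro ω hω
    simpa using hω
  calc μ {ω | δ < |f (X ω)|}
      ≤ ∑ v ∈ Finset.univ.filter (fun v => δ < |f v|), ENNReal.ofReal (P v) := by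
        refine (measure_mono hsub).trans ((measure_biUnion_finset_le _ _).trans_eq ?_)
        exact Finset.sum_congr rfl fun v _ => hX v
    _ = ENNReal.ofReal (∑ v ∈ Finset.univ.filter (fun v => δ < |f v|), P v) :=
        (ENNReal.ofReal_sum_of_nonneg fun v _ => hP v).symm
    _ ≤ _ := by
        refine ENNReal.ofReal_le_ofReal ?_
        rw [le_div_iff₀ (by positivity), Finset.sum_mul]
        refine (Finset.sum_le_sum fun v hv => ?_).trans
          (Finset.sum_le_univ_sum_of_nonneg fun v => mul_nonneg (hP v) (sq_nonneg (f v)))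
        refine mul_le_mul_of_nonneg_left ?_ (hP v)
        rw [← sq_abs (f v)]
        exact pow_le_pow_left₀ hδ.le (Finset.mem_filter.mp hv).2.le 2

/-- (`PropEstimator` guarantee.) Let `0 < ε < 1`, `nAdvice ≥ n`, and let
`m ≥ √(24·nAdvice)/ε + 1`. For `m` i.i.d. proportional samples, the estimate
`Ŵ = C(m,2) · (Σ_{i<j} Y_{ij})⁻¹` (interpreted as failing when the sum vanishes)
is a `(1 ± ε)`-approximation of `W` with probability at least `2/3`. -/
theorem propEstimator_guarantee
    {Ω U : Type*} [MeasurableSpace Ω] (μ : Measure Ω) [IsProbabilityMeasure μ]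
    [Fintype U] [DecidableEq U]
    (n : ℕ) (hn : Fintype.card U = n)
    (w : U → ℝ) (hw : ∀ x, 0 < w x)
    (W : ℝ) (hW : W = ∑ x, w x)
    (ε : ℝ) (hε0 : 0 < ε) (hε1 : ε < 1)
    (nAdvice : ℕ) (hnAdvice : n ≤ nAdvice)
    (m : ℕ) (hm : Real.sqrt (24 * nAdvice) / ε + 1 ≤ m)
    (a : Fin m → Ω → U)
    (hlaw : ∀ v : Fin m → U,
      μ {ω | ∀ i, a i ω = v i} = ∏ i, ENNReal.ofReal (w (v i) / W))
    (Y : Fin m → Fin m → Ω → ℝ)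
    (hY : ∀ i j ω, Y i j ω = if a i ω = a j ω then (w (a i ω))⁻¹ else 0)
    (What : Ω → ℝ)
    (hWhat : ∀ ω, What ω = (m.choose 2 : ℝ) * (∑ i, ∑ j ∈ Finset.Ioi i, Y i j ω)⁻¹) :
    (2 / 3 : ENNReal) ≤ μ {ω | |What ω - W| ≤ ε * W} := by
  have hn' : (n : ℝ) ≤ nAdvice := by exact_mod_cast hnAdvice
  have hm1 : 1 ≤ m := by
    have : (1 : ℝ) ≤ m := le_trans (by linarith [show 0 ≤ √(24 * nAdvice) / ε by positivity]) hm
    exact_mod_cast this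
  obtain ⟨ω₀⟩ : Nonempty Ω := nonempty_of_isProbabilityMeasure μ
  have : Nonempty U := ⟨a ⟨0, hm1⟩ ω₀⟩
  have hW0 : 0 < W := hW ▸ Finset.sum_pos (fun x _ => hw x) Finset.univ_nonempty
  have hn0 : (0 : ℝ) < n := by
    rw [← hn]
    exact_mod_cast Fintype.card_pos
  have hchoose : 12 * n ≤ ε ^ 2 * (m.choose 2 : ℝ) := by
    have hsqrt : √(24 * nAdvice) ≤ (m - 1) * ε := by
      rw [← div_le_iff₀ hε0]
      linarith
    rw [Real.sqrt_le_iff] at hsqrt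
    rw [Nat.cast_choose_two]
    have : (1 : ℝ) ≤ m := by exact_mod_cast hm1
    nlinarith [hsqrt.2, sq_nonneg ε, mul_nonneg (sq_nonneg ε) (sub_nonneg.2 this)]
  have hC : (0 : ℝ) < m.choose 2 := by
    refine pos_of_mul_pos_right (a := ε ^ 2) ?_ (sq_nonneg ε)
    linarith
  set C : ℝ := (m.choose 2 : ℝ)
  let T := (Finset.univ : Finset (Fin m)).sigma fun i => Finset.Ioi i
  let f : (Fin m → U) → ℝ := fun v => ∑ q ∈ T, centeredCollision w W q.1 q.2 v
  let X : Ω → Fin m → U := fun ω i => a i ω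
  have hcard : (T.card : ℝ) = C := congrArg Nat.cast (card_univ_sigma_Ioi m)
  have hf (ω : Ω) : f (X ω) = (∑ i, ∑ j ∈ Finset.Ioi i, Y i j ω) - C * W⁻¹ := by
    simp only [f, centeredCollision, Finset.sum_sub_distrib, Finset.sum_const, nsmul_eq_mul,
      hcard, hY, T, X, Finset.sum_sigma]
  have hδ : 0 < ε * C / (2 * W) := by positivity
  have hbad : μ {ω | ε * C / (2 * W) < |f (X ω)|} ≤ 1 / 3 := by
    refine (measure_lt_abs_le_of_law μ X (fun v => ∏ i, w (v i) / W)
      (fun v => Finset.prod_nonneg fun i _ => (div_pos (hw _) hW0).le) (fun v => ?_) f hδ).trans ?_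
    · rw [ENNReal.ofReal_prod_of_nonneg fun i _ => (div_pos (hw _) hW0).le, ← hlaw]
      simp only [X, funext_iff]
    · have hvar := sum_prod_mul_sum_centeredCollision_sq_le hw hW hW0 T fun q hq =>
        Finset.mem_Ioi.mp (Finset.mem_sigma.mp hq).2
      rw [hcard, hn] at hvar
      have : (∑ v : Fin m → U, (∏ i, w (v i) / W) * f v ^ 2) / (ε * C / (2 * W)) ^ 2 ≤ 1 / 3 := by
        rw [div_le_iff₀ (by positivity)]
        refine hvar.trans ?_
        rw [show C * (n / W ^ 2) = (12 * n) * C / (12 * W ^ 2) by field_simp,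
          show 1 / 3 * (ε * C / (2 * W)) ^ 2 = (ε ^ 2 * C) * C / (12 * W ^ 2) by
            field_simp
            norm_num]
        gcongr
      refine (ENNReal.ofReal_le_ofReal this).trans_eq ?_
      rw [ENNReal.ofReal_div_of_pos (by norm_num)]
      simp
  have hcover : Set.univ ⊆
      {ω | |What ω - W| ≤ ε * W} ∪ {ω | ε * C / (2 * W) < |f (X ω)|} := by
    intro ω _
    rcases le_or_gt |f (X ω)| (ε * C / (2 * W)) with h | h
    · left
      rw [Set.mem_ofPred_eq, hWhat]
      exact abs_mul_inv_sub_le hC hW0 hε0 hε1 (hf ω ▸ h)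
    · exact Or.inr h
  have hone : 1 ≤ μ {ω | |What ω - W| ≤ ε * W} + 1 / 3 := by
    refine (measure_univ (μ := μ)).ge.trans ?_
    exact (measure_mono hcover).trans ((measure_union_le _ _).trans (by gcongr))
  have hthird : (2 / 3 : ENNReal) + 1 / 3 = 1 := by
    rw [ENNReal.div_add_div_same, show (2 + 1 : ENNReal) = 3 by norm_num]
    exact ENNReal.div_self (by norm_num) (by norm_num)
  exact (ENNReal.add_le_add_iff_right (a := 1 / 3) (by simp)).mp (hthird.trans_le hone)
end

section
/- There exists a universal constant C > 0 such that the following holds. Let U be a finite set with |U| = n ≥ 2 and w : U → (0,∞) a positive weight function with total weight W = Σ_{a∈U} w(a). For i ∈ ℤ let B_i = { a ∈ U : 2^i ≤ w(a) < 2^{i+1} }. Let a₁, a₂ be i.i.d. proportional samples, set b_j = ⌊log₂ w(a_j)⌋ for j = 1, 2, and b = max(b₁, b₂). Let P_b = P_prop(B_b) = (Σ_{x∈B_b} w(x))/W be the proportional-sampling probability of the (random) bucket B_b. Then E[1/P_b] ≤ C·(1 + log n). -/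
open MeasureTheory ProbabilityTheory

/-- The Shannon entropy of a probability vector on a finite type is at most the logarithm of
the number of outcomes. -/
lemma sum_mul_neg_log_le_log_card {U : Type*} [Fintype U] (p : U → ℝ) (hp : ∀ x, 0 < p x)
    (hsum : ∑ x, p x = 1) : ∑ x, p x * -Real.log (p x) ≤ Real.log (Fintype.card U) := by
  have hne : Nonempty U := by
    by_contra h
    rw [not_nonempty_iff] at h
    simp at hsum
  have hn : (0 : ℝ) < Fintype.card U := by exact_mod_cast Fintype.card_pos
  have key : ∀ x, p x * -Real.log (p x) ≤
      p x * Real.log (Fintype.card U) + ((Fintype.card U : ℝ)⁻¹ - p x) := by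
    intro x
    have hx := hp x
    have h := Real.log_le_sub_one_of_pos (inv_pos.2 (mul_pos hn hx))
    rw [Real.log_inv, Real.log_mul hn.ne' hx.ne'] at h
    have h' := mul_le_mul_of_nonneg_left h hx.le
    have e : p x * (((Fintype.card U : ℝ) * p x)⁻¹ - 1) = (Fintype.card U : ℝ)⁻¹ - p x := by
      field_simp
    rw [e] at h'
    linarith
  calc ∑ x, p x * -Real.log (p x)
      ≤ ∑ x, (p x * Real.log (Fintype.card U) + ((Fintype.card U : ℝ)⁻¹ - p x)) :=
        Finset.sum_le_sum fun x _ => key x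
    _ = Real.log (Fintype.card U) := by
        rw [Finset.sum_add_distrib, Finset.sum_sub_distrib, ← Finset.sum_mul, hsum]
        simp [hn.ne']

/-- If each fiber of `β` has mass `Q`, then averaging the inverse mass of the larger fiber of two
independent points costs at most twice the expected number of fibers above a random point. -/
lemma sum_mul_inv_mass_max_le {U : Type*} [Fintype U] (β : U → ℤ) (p : U → ℝ)
    (hp : ∀ x, 0 < p x) (Q : ℤ → ℝ)
    (hQ : ∀ i, Q i = ∑ x ∈ Finset.univ.filter (fun x => β x = i), p x) :
    ∑ x, ∑ y, p x * p y * (Q (max (β x) (β y)))⁻¹ ≤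
      2 * ∑ x, p x * (((Finset.univ.image β).filter (fun i => β x ≤ i)).card : ℝ) := by
  have hQpos : ∀ x, 0 < Q (β x) := by
    intro x
    rw [hQ]
    exact Finset.sum_pos (fun y _ => hp y) ⟨x, by simp⟩
  have half : ∑ x, ∑ y, (if β y ≤ β x then p x * p y * (Q (β x))⁻¹ else 0) =
      ∑ x, p x * (((Finset.univ.image β).filter (fun i => β x ≤ i)).card : ℝ) := by
    have fiber : ∀ i ∈ Finset.univ.image β,
        ∑ x ∈ Finset.univ.filter (fun x => β x = i),
          ∑ y, (if β y ≤ β x then p x * p y * (Q (β x))⁻¹ else 0) =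
        ∑ y, if β y ≤ i then p y else 0 := by
      intro i hi
      obtain ⟨z, -, rfl⟩ := Finset.mem_image.1 hi
      rw [Finset.sum_comm]
      refine Finset.sum_congr rfl fun y _ => ?_
      have hQz := (hQpos z).ne'
      calc ∑ x ∈ Finset.univ.filter (fun x => β x = β z),
            (if β y ≤ β x then p x * p y * (Q (β x))⁻¹ else 0)
          = ∑ x ∈ Finset.univ.filter (fun x => β x = β z),
              p x * (if β y ≤ β z then p y * (Q (β z))⁻¹ else 0) := by
            refine Finset.sum_congr rfl fun x hx => ?_
            rw [(Finset.mem_filter.1 hx).2]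
            split_ifs <;> ring
        _ = if β y ≤ β z then p y else 0 := by
            rw [← Finset.sum_mul, ← hQ]
            split_ifs
            · field_simp
            · simp
    rw [← Finset.sum_fiberwise_of_maps_to (s := Finset.univ) (t := Finset.univ.image β) (g := β)
      (fun x hx => Finset.mem_image_of_mem β hx), Finset.sum_congr rfl fiber, Finset.sum_comm]
    refine Finset.sum_congr rfl fun y _ => ?_
    rw [← Finset.sum_filter, Finset.sum_const, nsmul_eq_mul, mul_comm]
  have half' : ∑ x, ∑ y, (if β x ≤ β y then p x * p y * (Q (β y))⁻¹ else 0) =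
      ∑ x, p x * (((Finset.univ.image β).filter (fun i => β x ≤ i)).card : ℝ) := by
    rw [← half, Finset.sum_comm]
    refine Finset.sum_congr rfl fun x _ => Finset.sum_congr rfl fun y _ => ?_
    rw [mul_comm (p y)]
  rw [two_mul]
  nth_rewrite 1 [← half]
  rw [← half', ← Finset.sum_add_distrib]
  refine Finset.sum_le_sum fun x _ => ?_
  rw [← Finset.sum_add_distrib]
  refine Finset.sum_le_sum fun y _ => ?_
  have hx : 0 ≤ p x * p y * (Q (β x))⁻¹ :=
    mul_nonneg (mul_pos (hp x) (hp y)).le (inv_pos.2 (hQpos x)).le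
  have hy : 0 ≤ p x * p y * (Q (β y))⁻¹ :=
    mul_nonneg (mul_pos (hp x) (hp y)).le (inv_pos.2 (hQpos y)).le
  rcases le_total (β x) (β y) with h | h
  · rw [max_eq_right h, if_pos h]
    split_ifs <;> linarith
  · rw [max_eq_left h, if_pos h]
    split_ifs <;> linarith

/-- The number of nonempty dyadic buckets at or above that of `x` is at most
`2 + log₂ (W / w x)`. -/
lemma card_dyadic_buckets_above_le {U : Type*} [Fintype U] (w : U → ℝ) (hw : ∀ x, 0 < w x)
    (x : U) :
    (((Finset.univ.image fun y => ⌊Real.logb 2 (w y)⌋).filter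
      (fun i => ⌊Real.logb 2 (w x)⌋ ≤ i)).card : ℝ) ≤
      2 + -Real.log (w x / ∑ y, w y) / Real.log 2 := by
  set W := ∑ y, w y with hW
  have hle : ∀ y, w y ≤ W := fun y =>
    Finset.single_le_sum (fun z _ => (hw z).le) (Finset.mem_univ y)
  have hWpos : 0 < W := (hw x).trans_le (hle x)
  have hfloor : ∀ y, ⌊Real.logb 2 (w y)⌋ ≤ ⌊Real.logb 2 W⌋ := fun y =>
    Int.floor_le_floor (Real.logb_le_logb_of_le one_lt_two (hw y) (hle y))
  have hsub : (Finset.univ.image fun y => ⌊Real.logb 2 (w y)⌋).filter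
      (fun i => ⌊Real.logb 2 (w x)⌋ ≤ i) ⊆
      Finset.Icc ⌊Real.logb 2 (w x)⌋ ⌊Real.logb 2 W⌋ := by
    intro i hi
    obtain ⟨him, hxi⟩ := Finset.mem_filter.1 hi
    obtain ⟨y, -, rfl⟩ := Finset.mem_image.1 him
    exact Finset.mem_Icc.2 ⟨hxi, hfloor y⟩
  have hcard := Finset.card_le_card hsub
  rw [Int.card_Icc] at hcard
  have hint : (((Finset.univ.image fun y => ⌊Real.logb 2 (w y)⌋).filter
      (fun i => ⌊Real.logb 2 (w x)⌋ ≤ i)).card : ℤ) ≤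
      ⌊Real.logb 2 W⌋ + 1 - ⌊Real.logb 2 (w x)⌋ := by
    have := hfloor x
    omega
  have hreal : (((Finset.univ.image fun y => ⌊Real.logb 2 (w y)⌋).filter
      (fun i => ⌊Real.logb 2 (w x)⌋ ≤ i)).card : ℝ) ≤
      ⌊Real.logb 2 W⌋ + 1 - ⌊Real.logb 2 (w x)⌋ := by exact_mod_cast hint
  have h₁ := Int.floor_le (Real.logb 2 W)
  have h₂ := Int.lt_floor_add_one (Real.logb 2 (w x))
  have e : -Real.log (w x / W) / Real.log 2 = Real.logb 2 W - Real.logb 2 (w x) := by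
    rw [Real.log_div (hw x).ne' hWpos.ne', Real.logb, Real.logb]
    ring
  rw [e]
  linarith

/-- The integral of a nonnegative function of a finitely valued map is at most the corresponding
finite sum, without any measurability assumption. -/
lemma integral_comp_le_sum {Ω V : Type*} [MeasurableSpace Ω] (μ : Measure Ω)
    [IsFiniteMeasure μ] [Fintype V] (a : Ω → V) (f : V → ℝ) (hf : ∀ v, 0 ≤ f v) :
    ∫ ω, f (a ω) ∂μ ≤ ∑ v, μ.real {ω | a ω = v} * f v := by
  have hint : ∀ v, Integrable
      ((toMeasurable μ {ω | a ω = v}).indicator fun _ => f v) μ := fun v =>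
    (integrable_const (f v)).indicator (measurableSet_toMeasurable _ _)
  have hle : ∀ ω, f (a ω) ≤
      ∑ v, (toMeasurable μ {ω | a ω = v}).indicator (fun _ => f v) ω := by
    intro ω
    have hmem : ω ∈ toMeasurable μ {ω' | a ω' = a ω} := subset_toMeasurable _ _ rfl
    calc f (a ω) = (toMeasurable μ {ω' | a ω' = a ω}).indicator (fun _ => f (a ω)) ω := by
          rw [Set.indicator_of_mem hmem]
      _ ≤ _ := Finset.single_le_sum
          (f := fun v => (toMeasurable μ {ω | a ω = v}).indicator (fun _ => f v) ω)
          (fun v _ => Set.indicator_nonneg (fun _ _ => hf v) ω) (Finset.mem_univ (a ω))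
  calc ∫ ω, f (a ω) ∂μ
      ≤ ∫ ω, ∑ v, (toMeasurable μ {ω | a ω = v}).indicator (fun _ => f v) ω ∂μ :=
        integral_mono_of_nonneg (ae_of_all _ fun ω => hf (a ω))
          (integrable_finsetSum _ fun v _ => hint v) (ae_of_all _ hle)
    _ = ∑ v, μ.real {ω | a ω = v} * f v := by
        rw [integral_finsetSum _ fun v _ => hint v]
        refine Finset.sum_congr rfl fun v _ => ?_
        rw [integral_indicator_const _ (measurableSet_toMeasurable _ _), smul_eq_mul,
          measureReal_def, measureReal_def, measure_toMeasurable]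

/-- There is a universal constant `C > 0` such that the following holds.
Partition a finite weighted set `(U, w)` (`|U| = n ≥ 2`) into buckets
`B_i = {a : 2^i ≤ w a < 2^{i+1}}`, i.e. `a ∈ B_{⌊log₂ w(a)⌋}`.  Draw two i.i.d.
proportional samples `a₁, a₂`, and let `b` be the larger of their bucket indices.
Then `E[1/P_prop(B_b)] ≤ C·(1 + log n)`. -/
theorem bucket_inverse_probability_bound :
    ∃ C : ℝ, 0 < C ∧
      ∀ (Ω U : Type) (_ : MeasurableSpace Ω) (μ : Measure Ω) (_ : IsProbabilityMeasure μ)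
        (_ : Fintype U) (_ : DecidableEq U) (n : ℕ), 2 ≤ n → Fintype.card U = n →
        ∀ (w : U → ℝ), (∀ x, 0 < w x) →
        ∀ (W : ℝ), W = ∑ x, w x →
        ∀ (a₁ a₂ : Ω → U),
          (∀ v₁ v₂ : U, μ {ω | a₁ ω = v₁ ∧ a₂ ω = v₂} =
            ENNReal.ofReal (w v₁ / W) * ENNReal.ofReal (w v₂ / W)) →
        ∀ (b : Ω → ℤ),
          (∀ ω, b ω = max ⌊Real.logb 2 (w (a₁ ω))⌋ ⌊Real.logb 2 (w (a₂ ω))⌋) →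
        ∀ (P : ℤ → ℝ),
          (∀ i : ℤ, P i =
            (∑ x ∈ Finset.univ.filter (fun x => ⌊Real.logb 2 (w x)⌋ = i), w x) / W) →
        ∫ ω, (P (b ω))⁻¹ ∂μ ≤ C * (1 + Real.log n) := by
  refine ⟨4, by norm_num, ?_⟩
  intro Ω U _ μ _ _ _ n hn hcard w hw W hW a₁ a₂ hμ b hb P hP
  have hne : Nonempty U := Fintype.card_pos_iff.1 (by omega)
  have hWpos : 0 < W := hW ▸ Finset.sum_pos (fun x _ => hw x) Finset.univ_nonempty
  have hp : ∀ x, 0 < w x / W := fun x => div_pos (hw x) hWpos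
  have hsum : ∑ x, w x / W = 1 := by rw [← Finset.sum_div, ← hW, div_self hWpos.ne']
  have hP' : ∀ i, P i =
      ∑ x ∈ Finset.univ.filter (fun x => ⌊Real.logb 2 (w x)⌋ = i), w x / W := fun i => by
    rw [hP, Finset.sum_div]
  have hPnonneg : ∀ i, 0 ≤ P i := fun i => by
    rw [hP']
    exact Finset.sum_nonneg fun x _ => (hp x).le
  have hentropy := sum_mul_neg_log_le_log_card (fun x => w x / W) hp hsum
  rw [hcard] at hentropy
  have hlog2 : (1 / 2 : ℝ) < Real.log 2 := by linarith [Real.log_two_gt_d9]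
  have hlogn : 0 ≤ Real.log n := Real.log_natCast_nonneg n
  have hmass : ∀ v : U × U, μ.real {ω | (a₁ ω, a₂ ω) = v} = w v.1 / W * (w v.2 / W) := by
    intro v
    have e : {ω | (a₁ ω, a₂ ω) = v} = {ω | a₁ ω = v.1 ∧ a₂ ω = v.2} := by
      ext ω
      simp [Prod.ext_iff]
    rw [e, measureReal_def, hμ, ENNReal.toReal_mul, ENNReal.toReal_ofReal (hp _).le,
      ENNReal.toReal_ofReal (hp _).le]
  calc ∫ ω, (P (b ω))⁻¹ ∂μ
      = ∫ ω, (P (max ⌊Real.logb 2 (w (a₁ ω))⌋ ⌊Real.logb 2 (w (a₂ ω))⌋))⁻¹ ∂μ := by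
        simp only [hb]
    _ ≤ ∑ v : U × U, μ.real {ω | (a₁ ω, a₂ ω) = v} *
          (P (max ⌊Real.logb 2 (w v.1)⌋ ⌊Real.logb 2 (w v.2)⌋))⁻¹ :=
        integral_comp_le_sum μ (fun ω => (a₁ ω, a₂ ω))
          (fun v => (P (max ⌊Real.logb 2 (w v.1)⌋ ⌊Real.logb 2 (w v.2)⌋))⁻¹)
          fun v => inv_nonneg.2 (hPnonneg _)
    _ = ∑ x, ∑ y, w x / W * (w y / W) *
          (P (max ⌊Real.logb 2 (w x)⌋ ⌊Real.logb 2 (w y)⌋))⁻¹ := by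
        simp only [hmass]
        rw [Fintype.sum_prod_type]
    _ ≤ 2 * ∑ x, w x / W * (((Finset.univ.image fun y => ⌊Real.logb 2 (w y)⌋).filter
          (fun i => ⌊Real.logb 2 (w x)⌋ ≤ i)).card : ℝ) :=
        sum_mul_inv_mass_max_le (fun x => ⌊Real.logb 2 (w x)⌋) (fun x => w x / W) hp P hP'
    _ ≤ 2 * ∑ x, w x / W * (2 + -Real.log (w x / W) / Real.log 2) := by
        gcongr with x
        · exact (hp x).le
        · rw [hW]
          exact card_dyadic_buckets_above_le w hw x
    _ = 4 + 2 * (∑ x, w x / W * -Real.log (w x / W)) / Real.log 2 := by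
        simp only [mul_add, Finset.sum_add_distrib, ← Finset.sum_mul, hsum, ← mul_div_assoc,
          ← Finset.sum_div]
        ring
    _ ≤ 4 + 2 * Real.log n / Real.log 2 := by gcongr
    _ ≤ 4 * (1 + Real.log n) := by
        have : 2 * Real.log n / Real.log 2 ≤ 4 * Real.log n := by
          rw [div_le_iff₀ (by linarith)]
          nlinarith
        linarith
end

section
/- There exists a universal constant C > 0 such that the following holds. Let U be a finite set with |U| = n ≥ 2 and w : U → (0,∞) a positive weight function with total weight W = Σ_{a∈U} w(a). For i ∈ ℤ let B_i = { a ∈ U : 2^i ≤ w(a) < 2^{i+1} } and let n_i = |B_i|. Let a₁, a₂ be i.i.d. proportional samples, set b_j = ⌊log₂ w(a_j)⌋ for j = 1, 2, and b = max(b₁, b₂). Let P_b = P_prop(B_b) = (Σ_{x∈B_b} w(x))/W. Then E[√(n_b)/P_b] ≤ C·√n. -/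
open MeasureTheory ProbabilityTheory

/-- No measurability of the fibres of `X` is required: they are replaced by measurable hulls. -/
lemma integral_comp_le_sum_measureReal_fiber {Ω V : Type*} [MeasurableSpace Ω] (μ : Measure Ω)
    [IsFiniteMeasure μ] [Fintype V] (X : Ω → V) (g : V → ℝ) (hg : ∀ v, 0 ≤ g v) :
    ∫ ω, g (X ω) ∂μ ≤ ∑ v, μ.real {ω | X ω = v} * g v := by
  classical
  set A : V → Set Ω := fun v => toMeasurable μ {ω | X ω = v}
  have hA : ∀ v, MeasurableSet (A v) := fun v => measurableSet_toMeasurable _ _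
  have hintegrable : ∀ v, Integrable ((A v).indicator fun _ => g v) μ := fun v =>
    (integrable_const _).indicator (hA v)
  calc ∫ ω, g (X ω) ∂μ ≤ ∫ ω, ∑ v, (A v).indicator (fun _ => g v) ω ∂μ := by
        refine integral_mono_of_nonneg (Filter.Eventually.of_forall fun ω => hg _)
          (integrable_finsetSum _ fun v _ => hintegrable v) (Filter.Eventually.of_forall fun ω => ?_)
        have hmem : ω ∈ A (X ω) := subset_toMeasurable μ {ω' | X ω' = X ω} rfl
        calc g (X ω) = (A (X ω)).indicator (fun _ => g (X ω)) ω := by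
              rw [Set.indicator_of_mem hmem]
          _ ≤ ∑ v, (A v).indicator (fun _ => g v) ω :=
              Finset.single_le_sum (f := fun v => (A v).indicator (fun _ => g v) ω)
                (fun v _ => Set.indicator_nonneg (fun _ _ => hg v) ω) (Finset.mem_univ _)
    _ = ∑ v, μ.real {ω | X ω = v} * g v := by
        rw [integral_finsetSum _ fun v _ => hintegrable v]
        refine Finset.sum_congr rfl fun v _ => ?_
        rw [integral_indicator_const _ (hA v), smul_eq_mul, measureReal_def, measureReal_def,
          measure_toMeasurable]

lemma sum_zpow_le_of_forall_le {r : ℝ} (h0 : 0 < r) (h1 : r < 1) (s : Finset ℤ) (k : ℤ)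
    (hs : ∀ i ∈ s, k ≤ i) : ∑ i ∈ s, r ^ i ≤ r ^ k * (1 - r)⁻¹ := by
  calc ∑ i ∈ s, r ^ i = ∑ i ∈ s, r ^ k * r ^ (i - k).toNat := by
        refine Finset.sum_congr rfl fun i hi => ?_
        rw [← zpow_natCast, Int.toNat_of_nonneg (sub_nonneg.2 (hs i hi)), ← zpow_add₀ h0.ne']
        congr 1
        ring
    _ = r ^ k * ∑ m ∈ s.image fun i => (i - k).toNat, r ^ m := by
        rw [← Finset.mul_sum, Finset.sum_image]
        intro i hi j hj hij
        have := hs i hi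
        have := hs j hj
        simp only at hij
        omega
    _ ≤ r ^ k * (1 - r)⁻¹ := by
        rw [← tsum_geometric_of_lt_one h0.le h1]
        exact mul_le_mul_of_nonneg_left
          ((summable_geometric_of_lt_one h0.le h1).sum_le_tsum _ fun _ _ => by positivity)
          (by positivity)

lemma two_zpow_floor_logb_le {x : ℝ} (hx : 0 < x) : (2 : ℝ) ^ ⌊Real.logb 2 x⌋ ≤ x := by
  rw [← Real.rpow_intCast, ← Real.le_logb_iff_rpow_le (by norm_num) hx]
  exact Int.floor_le _

lemma lt_two_zpow_floor_logb_add_one {x : ℝ} (hx : 0 < x) :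
    x < (2 : ℝ) ^ (⌊Real.logb 2 x⌋ + 1) := by
  rw [← Real.rpow_intCast, ← Real.logb_lt_iff_lt_rpow (by norm_num) hx]
  push_cast
  exact Int.lt_floor_add_one _

lemma sum_mul_max_le_two_mul {U ι : Type*} [Fintype U] [LinearOrder ι] (β : U → ι) (p : U → ℝ)
    (F : ι → ℝ) (hp : ∀ x, 0 ≤ p x) (hF : ∀ i, 0 ≤ F i) :
    ∑ x, ∑ y, p x * p y * F (max (β x) (β y)) ≤
      2 * ∑ y, p y * ∑ x with β y ≤ β x, p x * F (β x) := by
  set G : U → U → ℝ := fun x y => if β y ≤ β x then p y * (p x * F (β x)) else 0 with hG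
  have hG0 : ∀ x y, 0 ≤ G x y := fun x y => by
    simp only [hG]
    split_ifs
    · exact mul_nonneg (hp _) (mul_nonneg (hp _) (hF _))
    · exact le_rfl
  have hle : ∀ x y, p x * p y * F (max (β x) (β y)) ≤ G x y + G y x := by
    intro x y
    rcases le_total (β y) (β x) with h | h
    · have : G x y = p x * p y * F (max (β x) (β y)) := by
        simp only [hG, if_pos h, max_eq_left h]
        ring
      linarith [hG0 y x]
    · have : G y x = p x * p y * F (max (β x) (β y)) := by
        simp only [hG, if_pos h, max_eq_right h]
        ring
      linarith [hG0 x y]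
  have hsum : ∑ y, p y * ∑ x with β y ≤ β x, p x * F (β x) = ∑ y, ∑ x, G x y := by
    refine Finset.sum_congr rfl fun y _ => ?_
    rw [Finset.mul_sum, Finset.sum_filter]
  calc _ ≤ ∑ x, ∑ y, (G x y + G y x) :=
        Finset.sum_le_sum fun x _ => Finset.sum_le_sum fun y _ => hle x y
    _ = 2 * ∑ y, ∑ x, G x y := by
        simp only [Finset.sum_add_distrib]
        rw [Finset.sum_comm, two_mul]
    _ = _ := by rw [hsum]

/-- Each nonempty bucket `i` contributes `√(n_i)`, and `n_i ≤ W / 2 ^ i`, so the sum over the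
buckets from that of `y` upwards is geometric. -/
lemma sum_bucket_above_le {U : Type*} [Fintype U] (w : U → ℝ) (hw : ∀ x, 0 < w x) {W : ℝ}
    (hW : W = ∑ x, w x) (β : U → ℤ) (hβ : ∀ x, β x = ⌊Real.logb 2 (w x)⌋) (y : U) :
    ∑ x with β y ≤ β x, w x / W *
      (√((Finset.univ.filter fun z => β z = β x).card : ℝ) /
        ((∑ z with β z = β x, w z) / W)) ≤ 8 * √(W / w y) := by
  classical
  have hW0 : 0 < W := hW ▸ Finset.sum_pos (fun x _ => hw x) ⟨y, Finset.mem_univ _⟩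
  set r : ℝ := √(1 / 2) with hr
  have hr0 : 0 < r := Real.sqrt_pos.2 (by norm_num)
  have hr34 : r ≤ 3 / 4 := Real.sqrt_le_iff.2 ⟨by norm_num, by norm_num⟩
  have hrsq : ∀ i : ℤ, (r ^ i) ^ 2 = ((2 : ℝ) ^ i)⁻¹ := fun i => by
    rw [← zpow_natCast, zpow_comm, zpow_natCast, hr, Real.sq_sqrt (by norm_num), one_div, inv_zpow]
  have hcard : ∀ i, √((Finset.univ.filter fun z => β z = i).card : ℝ) ≤ √W * r ^ i := by
    intro i
    refine Real.sqrt_le_iff.2 ⟨by positivity, ?_⟩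
    rw [mul_pow, Real.sq_sqrt hW0.le, hrsq, ← div_eq_mul_inv, le_div_iff₀ (by positivity),
      ← nsmul_eq_mul, ← Finset.sum_const, hW]
    refine (Finset.sum_le_sum fun z hz => ?_).trans
      (Finset.sum_le_sum_of_subset_of_nonneg (Finset.filter_subset _ _) fun z _ _ => (hw z).le)
    rw [← (Finset.mem_filter.1 hz).2, hβ]
    exact two_zpow_floor_logb_le (hw z)
  set S : Finset ℤ := (Finset.univ.filter fun x => β y ≤ β x).image β with hS
  have hSle : ∀ i ∈ S, β y ≤ i := by
    intro i hi
    obtain ⟨x, hx, rfl⟩ := Finset.mem_image.1 hi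
    exact (Finset.mem_filter.1 hx).2
  have hry : r ^ β y ≤ √2 / √(w y) := by
    rw [← Real.sqrt_div (by norm_num)]
    refine Real.le_sqrt_of_sq_le ?_
    have hlt := lt_two_zpow_floor_logb_add_one (hw y)
    rw [← hβ, zpow_add_one₀ two_ne_zero] at hlt
    rw [hrsq, le_div_iff₀ (hw y), inv_mul_le_iff₀ (by positivity)]
    exact hlt.le
  have hsqrt2 : √2 ≤ 2 := Real.sqrt_le_iff.2 ⟨by norm_num, by norm_num⟩
  calc _ = ∑ i ∈ S, √((Finset.univ.filter fun z => β z = i).card : ℝ) := by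
        rw [← Finset.sum_fiberwise_of_maps_to (t := S) (g := β)
          (fun x hx => Finset.mem_image_of_mem _ hx)]
        refine Finset.sum_congr rfl fun i hi => ?_
        have hfil : (Finset.univ.filter fun x => β y ≤ β x).filter (fun x => β x = i) =
            Finset.univ.filter fun x => β x = i := by
          ext x
          have := hSle i hi
          simp only [Finset.mem_filter, Finset.mem_univ, true_and]
          omega
        have hpos : 0 < ∑ z with β z = i, w z := by
          obtain ⟨x, _, hx⟩ := Finset.mem_image.1 hi
          exact Finset.sum_pos (fun z _ => hw z)
            ⟨x, Finset.mem_filter.2 ⟨Finset.mem_univ _, hx⟩⟩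
        rw [hfil]
        calc _ = ∑ x with β x = i, w x / W *
              (√((Finset.univ.filter fun z => β z = i).card : ℝ) /
                ((∑ z with β z = i, w z) / W)) := by
              refine Finset.sum_congr rfl fun x hx => ?_
              rw [(Finset.mem_filter.1 hx).2]
          _ = _ := by
              rw [← Finset.sum_mul, ← Finset.sum_div]
              field_simp
    _ ≤ ∑ i ∈ S, √W * r ^ i := Finset.sum_le_sum fun i _ => hcard i
    _ = √W * ∑ i ∈ S, r ^ i := by rw [Finset.mul_sum]
    _ ≤ √W * (r ^ β y * (1 - r)⁻¹) := by
        gcongr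
        exact sum_zpow_le_of_forall_le hr0 (by linarith) S _ hSle
    _ ≤ √W * (2 / √(w y) * 4) := by
        have h4 : (1 - r)⁻¹ ≤ 4 := inv_le_of_inv_le₀ (by norm_num) (by norm_num; linarith)
        have h0 : 0 ≤ (1 - r)⁻¹ := inv_nonneg.2 (by linarith)
        have h2 : r ^ β y ≤ 2 / √(w y) := hry.trans (by gcongr)
        gcongr
    _ = 8 * √(W / w y) := by
        rw [Real.sqrt_div hW0.le]
        ring

lemma sum_sqrt_le_sqrt_card {U : Type*} [Fintype U] (p : U → ℝ) (hp : ∀ x, 0 ≤ p x)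
    (hsum : ∑ x, p x ≤ 1) : ∑ x, √(p x) ≤ √(Fintype.card U : ℝ) := by
  refine Real.le_sqrt_of_sq_le ((sq_sum_le_card_mul_sum_sq (s := Finset.univ)).trans ?_)
  simp only [Real.sq_sqrt (hp _), Finset.card_univ]
  exact mul_le_of_le_one_right (by positivity) hsum

/-- There is a universal constant `C > 0` such that the following holds.
With buckets `B_i = {a : 2^i ≤ w a < 2^{i+1}}` (so `a ∈ B_{⌊log₂ w(a)⌋}`), two i.i.d.
proportional samples `a₁, a₂`, and `b` the larger of their bucket indices, one has
`E[√(n_b)/P_prop(B_b)] ≤ C·√n`, where `n_i = |B_i|`. -/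
theorem bucket_sqrt_card_over_probability_bound :
    ∃ C : ℝ, 0 < C ∧
      ∀ (Ω U : Type) (_ : MeasurableSpace Ω) (μ : Measure Ω) (_ : IsProbabilityMeasure μ)
        (_ : Fintype U) (_ : DecidableEq U) (n : ℕ), 2 ≤ n → Fintype.card U = n →
        ∀ (w : U → ℝ), (∀ x, 0 < w x) →
        ∀ (W : ℝ), W = ∑ x, w x →
        ∀ (a₁ a₂ : Ω → U),
          (∀ v₁ v₂ : U, μ {ω | a₁ ω = v₁ ∧ a₂ ω = v₂} =
            ENNReal.ofReal (w v₁ / W) * ENNReal.ofReal (w v₂ / W)) →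
        ∀ (b : Ω → ℤ),
          (∀ ω, b ω = max ⌊Real.logb 2 (w (a₁ ω))⌋ ⌊Real.logb 2 (w (a₂ ω))⌋) →
        ∀ (P : ℤ → ℝ),
          (∀ i : ℤ, P i =
            (∑ x ∈ Finset.univ.filter (fun x => ⌊Real.logb 2 (w x)⌋ = i), w x) / W) →
        ∀ (N : ℤ → ℕ),
          (∀ i : ℤ, N i = (Finset.univ.filter (fun x => ⌊Real.logb 2 (w x)⌋ = i)).card) →
        ∫ ω, Real.sqrt (N (b ω)) / P (b ω) ∂μ ≤ C * Real.sqrt n := by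
  refine ⟨16, by norm_num, ?_⟩
  intro Ω U _ μ _ _ _ n hn hcard w hw W hW a₁ a₂ hμ b hb P hP N hN
  have hne : Nonempty U := Fintype.card_pos_iff.1 (by omega)
  have hW0 : 0 < W := hW ▸ Finset.sum_pos (fun x _ => hw x) Finset.univ_nonempty
  obtain ⟨β, hβ⟩ : ∃ β : U → ℤ, ∀ x, β x = ⌊Real.logb 2 (w x)⌋ := ⟨_, fun _ => rfl⟩
  obtain ⟨F, hFdef⟩ : ∃ F : ℤ → ℝ, ∀ i, F i = √(N i : ℝ) / P i := ⟨_, fun _ => rfl⟩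
  simp only [← hβ] at hb hP hN
  have hF : ∀ i, 0 ≤ F i := fun i => by
    rw [hFdef, hP]
    refine div_nonneg (Real.sqrt_nonneg _) ?_
    exact div_nonneg (Finset.sum_nonneg fun x _ => (hw x).le) hW0.le
  have hp : ∀ x, 0 ≤ w x / W := fun x => (div_pos (hw x) hW0).le
  calc ∫ ω, √(N (b ω) : ℝ) / P (b ω) ∂μ
      = ∫ ω, F (max (β (a₁ ω)) (β (a₂ ω))) ∂μ := by
        simp only [hb, hFdef]
    _ ≤ ∑ v : U × U, μ.real {ω | (a₁ ω, a₂ ω) = v} * F (max (β v.1) (β v.2)) :=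
        integral_comp_le_sum_measureReal_fiber μ (fun ω => (a₁ ω, a₂ ω))
          (fun v : U × U => F (max (β v.1) (β v.2))) fun v => hF _
    _ = ∑ x, ∑ y, w x / W * (w y / W) * F (max (β x) (β y)) := by
        rw [Fintype.sum_prod_type]
        refine Finset.sum_congr rfl fun x _ => Finset.sum_congr rfl fun y _ => ?_
        simp only [Prod.mk.injEq]
        rw [measureReal_def, hμ, ENNReal.toReal_mul, ENNReal.toReal_ofReal (hp x),
          ENNReal.toReal_ofReal (hp y)]
    _ ≤ 2 * ∑ y, w y / W * ∑ x with β y ≤ β x, w x / W * F (β x) :=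
        sum_mul_max_le_two_mul β (fun x => w x / W) F hp hF
    _ ≤ 2 * ∑ y, w y / W * (8 * √(W / w y)) := by
        gcongr with y
        · exact hp y
        · simp only [hFdef, hN, hP]
          exact sum_bucket_above_le w hw hW β hβ y
    _ = 16 * ∑ y, √(w y / W) := by
        rw [Finset.mul_sum, Finset.mul_sum]
        refine Finset.sum_congr rfl fun y _ => ?_
        have hs : 0 < √(w y / W) := Real.sqrt_pos.2 (div_pos (hw y) hW0)
        have hsq := Real.mul_self_sqrt (hp y)
        rw [← inv_div (w y) W, Real.sqrt_inv]
        nth_rewrite 1 [← hsq]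
        field_simp
        norm_num
    _ ≤ 16 * √(n : ℝ) := by
        rw [← hcard]
        gcongr
        refine sum_sqrt_le_sqrt_card _ hp ?_
        rw [← Finset.sum_div, ← hW, div_self hW0.ne']
end

section
/- For every sequence of parameters (n_k, ε_k, m_k) with n_k → ∞, 0 < ε_k < 1/3, (1−ε_k)·n_k a positive integer, m_k·ε_k/√(n_k) → 0 and m_k/n_k → 0, the following holds for all k large enough. Let N be a random set size equal to n_k with probability 1/2 and to (1−ε_k)·n_k otherwise; conditionally on N, draw m_k i.i.d. uniform samples from a set of size N and let ℓ be the number of distinct elements among them. Define the likelihood ratio R(ℓ) = (1−ε_k)^{m_k−ℓ} · Π_{i=1}^{ℓ−1} (1 − i/n_k)/(1 − i/((1−ε_k)·n_k)) (which equals the ratio P(fingerprint | N = n_k)/P(fingerprint | N = (1−ε_k)·n_k)). Then P( 98/100 ≤ R(ℓ) ≤ 100/98 ) ≥ 99/100. -/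
open MeasureTheory ProbabilityTheory Filter

/-- The average of `g (number of distinct values of v)` over all `v : Fin m → Fin r`. -/
noncomputable def distinctAvg (r m : ℕ) (g : ℕ → ℝ) : ℝ :=
  (∑ v : Fin m → Fin r, g (Finset.univ.image v).card) / (r : ℝ) ^ m

lemma sum_card_insert {r : ℕ} (S : Finset (Fin r)) (g : ℕ → ℝ) :
    ∑ a, g (insert a S).card = S.card * g S.card + (r - S.card) * g (S.card + 1) := by
  rw [← Finset.sum_add_sum_compl S]
  congr 1
  · rw [Finset.sum_congr rfl (fun a ha => by rw [Finset.insert_eq_of_mem ha])]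
    simp
  · rw [Finset.sum_congr rfl (fun a ha => by
      rw [Finset.card_insert_of_notMem (Finset.mem_compl.1 ha)])]
    have hS : S.card ≤ r := by simpa using S.card_le_univ
    simp [Finset.card_compl, Nat.cast_sub hS]

lemma image_univ_cons {r m : ℕ} (a : Fin r) (v : Fin m → Fin r) :
    Finset.univ.image (Fin.cons a v : Fin (m + 1) → Fin r) =
      insert a (Finset.univ.image v) := by
  ext x
  simp [Fin.exists_fin_succ, eq_comm]

/-- One more draw: it repeats a value with probability `d / r` when `d` values were seen. -/
lemma distinctAvg_succ {r : ℕ} (hr : 0 < r) (m : ℕ) (g : ℕ → ℝ) :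
    distinctAvg r (m + 1) g =
      distinctAvg r m (fun d => (d / r : ℝ) * g d + (1 - d / r) * g (d + 1)) := by
  have hr' : (r : ℝ) ≠ 0 := by positivity
  have key : ∑ v : Fin (m + 1) → Fin r, g (Finset.univ.image v).card =
      ∑ v : Fin m → Fin r, (r : ℝ) * (((Finset.univ.image v).card / r : ℝ) *
        g (Finset.univ.image v).card +
        (1 - (Finset.univ.image v).card / r) * g ((Finset.univ.image v).card + 1)) := by
    rw [← (Fin.consEquiv (fun _ : Fin (m + 1) => Fin r)).sum_comp, Fintype.sum_prod_type_right]
    refine Finset.sum_congr rfl fun v _ => ?_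
    have hcons : ∀ a : Fin r, Fin.consEquiv (fun _ : Fin (m + 1) => Fin r) (a, v) =
        (Fin.cons a v : Fin (m + 1) → Fin r) := fun _ => rfl
    simp only [hcons, image_univ_cons, sum_card_insert]
    field_simp
  rw [distinctAvg, distinctAvg, key, ← Finset.mul_sum, pow_succ]
  field_simp

lemma distinctAvg_zero (r : ℕ) (g : ℕ → ℝ) : distinctAvg r 0 g = g 0 := by
  simp [distinctAvg]

lemma distinctAvg_mono {r m : ℕ} {g h : ℕ → ℝ} (hgh : ∀ d ≤ m, g d ≤ h d) :
    distinctAvg r m g ≤ distinctAvg r m h := by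
  unfold distinctAvg
  gcongr with v
  exact hgh _ (by simpa using Finset.card_image_le (s := Finset.univ) (f := v))

lemma distinctAvg_congr {r m : ℕ} {g h : ℕ → ℝ} (hgh : ∀ d ≤ m, g d = h d) :
    distinctAvg r m g = distinctAvg r m h :=
  le_antisymm (distinctAvg_mono fun d hd => (hgh d hd).le)
    (distinctAvg_mono fun d hd => (hgh d hd).ge)

lemma distinctAvg_add (r m : ℕ) (g h : ℕ → ℝ) :
    distinctAvg r m (fun d => g d + h d) = distinctAvg r m g + distinctAvg r m h := by
  simp [distinctAvg, Finset.sum_add_distrib, add_div]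

lemma distinctAvg_const_mul (r m : ℕ) (c : ℝ) (g : ℕ → ℝ) :
    distinctAvg r m (fun d => c * g d) = c * distinctAvg r m g := by
  simp [distinctAvg, ← Finset.mul_sum, mul_div_assoc]

lemma distinctAvg_one {r : ℕ} (hr : 0 < r) (m : ℕ) :
    distinctAvg r m (fun _ => 1) = 1 := by
  have hr' : (r : ℝ) ≠ 0 := by positivity
  simp [distinctAvg, hr']

/-- The likelihood ratio between set sizes `n` and `(1 - e) * n` after `m` draws
showing `l` distinct values. -/
noncomputable def likelihoodRatio (n : ℕ) (e : ℝ) (m l : ℕ) : ℝ :=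
  (1 - e) ^ (m - l) *
    ∏ i ∈ Finset.Ico 1 l, (1 - (i : ℝ) / n) / (1 - (i : ℝ) / ((1 - e) * n))

lemma likelihoodRatio_succ_left (n : ℕ) (e : ℝ) {m l : ℕ} (hl : l ≤ m) :
    likelihoodRatio n e (m + 1) l = (1 - e) * likelihoodRatio n e m l := by
  rw [likelihoodRatio, likelihoodRatio, Nat.succ_sub hl, pow_succ]
  ring

lemma likelihoodRatio_succ_succ (n : ℕ) (e : ℝ) (m l : ℕ) :
    likelihoodRatio n e (m + 1) (l + 1) =
      likelihoodRatio n e m l * ((1 - (l : ℝ) / n) / (1 - (l : ℝ) / ((1 - e) * n))) := by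
  rw [likelihoodRatio, likelihoodRatio, Nat.add_sub_add_right]
  rcases Nat.eq_zero_or_pos l with rfl | hl
  · simp
  · rw [Finset.prod_Ico_succ_top hl]
    ring

/-- Change of measure between set sizes `n` and `r = (1 - e) * n`. -/
lemma distinctAvg_eq_likelihoodRatio_mul {n r : ℕ} {e : ℝ} (hn : 0 < n) (hr : 0 < r)
    (hrn : (r : ℝ) = (1 - e) * n) {m : ℕ} (hm : m ≤ r) (g : ℕ → ℝ) :
    distinctAvg n m g = distinctAvg r m (fun d => likelihoodRatio n e m d * g d) := by
  induction m generalizing g with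
  | zero => simp [distinctAvg_zero, likelihoodRatio]
  | succ m ih =>
    rw [distinctAvg_succ hn, distinctAvg_succ hr, ih (by omega)]
    refine distinctAvg_congr fun d hd => ?_
    have hn' : (n : ℝ) ≠ 0 := by positivity
    have hr' : (r : ℝ) ≠ 0 := by positivity
    have ha : 1 - e ≠ 0 := fun h => hr' (by rw [hrn, h, zero_mul])
    have hdr : (d : ℝ) < r := by exact_mod_cast (show d < r by omega)
    have hd' : 1 - (d : ℝ) / r ≠ 0 := by
      rw [sub_ne_zero]
      exact ((div_lt_one (by positivity)).2 hdr).ne'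
    rw [likelihoodRatio_succ_left n e hd, likelihoodRatio_succ_succ, ← hrn]
    have h1 : (d / r : ℝ) * (1 - e) = d / n := by
      rw [hrn]
      field_simp
    have h2 : (1 - d / r : ℝ) * ((1 - d / n) / (1 - d / r)) = 1 - d / n :=
      mul_div_cancel₀ _ hd'
    linear_combination (-(likelihoodRatio n e m d * g d)) * h1 -
      (likelihoodRatio n e m d * g (d + 1)) * h2

lemma distinctAvg_likelihoodRatio {n r : ℕ} {e : ℝ} (hn : 0 < n) (hr : 0 < r)
    (hrn : (r : ℝ) = (1 - e) * n) {m : ℕ} (hm : m ≤ r) :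
    distinctAvg r m (likelihoodRatio n e m) = 1 := by
  simpa [distinctAvg_one hn] using
    (distinctAvg_eq_likelihoodRatio_mul hn hr hrn hm (fun _ => 1)).symm

/-- Each draw multiplies the second moment of the likelihood ratio by at most
`1 + e² M / (r - M)` as long as at most `M` values were seen. -/
lemma distinctAvg_likelihoodRatio_sq_le {n r M : ℕ} {e : ℝ} (hn : 0 < n) (hr : 0 < r)
    (hrn : (r : ℝ) = (1 - e) * n) (hM : M < r) {m : ℕ} (hm : m ≤ M) :
    distinctAvg r m (fun d => likelihoodRatio n e m d ^ 2) ≤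
      (1 + e ^ 2 * M / (r - M)) ^ m := by
  have hMr : (0 : ℝ) < r - M := sub_pos.2 (by exact_mod_cast hM)
  induction m with
  | zero => simp [distinctAvg_zero, likelihoodRatio]
  | succ m ih =>
    rw [distinctAvg_succ hr, pow_succ, mul_comm]
    refine le_trans ?_ (mul_le_mul_of_nonneg_left (ih (by omega)) (by positivity))
    rw [← distinctAvg_const_mul]
    refine distinctAvg_mono fun d hd => ?_
    have hn' : (n : ℝ) ≠ 0 := by positivity
    have hr' : (r : ℝ) ≠ 0 := by positivity
    have ha : 1 - e ≠ 0 := fun h => hr' (by rw [hrn, h, zero_mul])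
    have hdM : (d : ℝ) ≤ M := by exact_mod_cast (show d ≤ M by omega)
    have hdr : (0 : ℝ) < r - d := by linarith
    rw [likelihoodRatio_succ_left n e hd, likelihoodRatio_succ_succ, ← hrn]
    have h1 : (d / n : ℝ) = (1 - e) * (d / r) := by
      rw [hrn]
      field_simp
    have h2 : (d / r : ℝ) * (1 - e) ^ 2 +
        (1 - d / r) * ((1 - d / n) / (1 - d / r)) ^ 2 = 1 + e ^ 2 * d / (r - d) := by
      have h3 : (1 - d / r : ℝ) = (r - d) / r := by field_simp
      rw [h1, h3]
      field_simp
      ring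
    have h4 : e ^ 2 * d / (r - d) ≤ e ^ 2 * M / (r - M) := by gcongr
    calc _ = ((d / r : ℝ) * (1 - e) ^ 2 +
        (1 - d / r) * ((1 - d / n) / (1 - d / r)) ^ 2) * likelihoodRatio n e m d ^ 2 := by ring
      _ ≤ _ := by
        rw [h2]
        gcongr

/-- The indicator of the values at which the likelihood ratio is far from `1`. -/
noncomputable def ratioFar (n : ℕ) (e : ℝ) (m l : ℕ) : ℝ :=
  open Classical in
  if 98 / 100 ≤ likelihoodRatio n e m l ∧ likelihoodRatio n e m l ≤ 100 / 98 then 0 else 1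

lemma ratioFar_le (n : ℕ) (e : ℝ) (m l : ℕ) :
    ratioFar n e m l ≤ 2550 * (likelihoodRatio n e m l - 1) ^ 2 := by
  unfold ratioFar
  split_ifs with h
  · positivity
  · rw [not_and_or, not_le, not_le] at h
    rcases h with h | h <;> nlinarith

lemma likelihoodRatio_mul_ratioFar_le (n : ℕ) (e : ℝ) (m l : ℕ) :
    likelihoodRatio n e m l * ratioFar n e m l ≤
      2550 * (likelihoodRatio n e m l - 1) ^ 2 := by
  unfold ratioFar
  split_ifs with h
  · rw [mul_zero]
    positivity
  · rw [not_and_or, not_le, not_le] at h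
    rcases h with h | h <;> nlinarith

lemma distinctAvg_ratioFar_le {n r m : ℕ} {e : ℝ} (hn : 0 < n) (hr : 0 < r)
    (hrn : (r : ℝ) = (1 - e) * n) (hm : m < r)
    (hsmall : e ^ 2 * m ^ 2 / (r - m) ≤ 1 / 1000000) :
    distinctAvg n m (ratioFar n e m) ≤ 1 / 100 ∧
      distinctAvg r m (ratioFar n e m) ≤ 1 / 100 := by
  have hmr : (0 : ℝ) < r - m := sub_pos.2 (by exact_mod_cast hm)
  have hsq : distinctAvg r m (fun d => likelihoodRatio n e m d ^ 2) ≤ 1 + 1 / 500000 := by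
    refine (distinctAvg_likelihoodRatio_sq_le hn hr hrn hm le_rfl).trans ?_
    set x : ℝ := e ^ 2 * m / (r - m) with hx
    set y : ℝ := e ^ 2 * m ^ 2 / (r - m) with hy
    have hx0 : 0 ≤ x := by positivity
    have hy0 : 0 ≤ y := by positivity
    have hxy : x * m = y := by
      rw [hx, hy]
      ring
    calc (1 + x) ^ m ≤ Real.exp x ^ m := by
          gcongr
          linarith [Real.add_one_le_exp x]
      _ = Real.exp y := by rw [← Real.exp_nat_mul, ← hxy, mul_comm]
      _ ≤ 1 + 1 / 500000 := by
          have := Real.abs_exp_sub_one_le (x := y) (by rw [abs_of_nonneg hy0]; linarith)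
          rw [abs_of_nonneg hy0] at this
          linarith [le_abs_self (Real.exp y - 1)]
  have hchi : distinctAvg r m (fun d => 2550 * (likelihoodRatio n e m d - 1) ^ 2) ≤
      1 / 100 := by
    have hexp : (fun d => (2550 : ℝ) * (likelihoodRatio n e m d - 1) ^ 2) =
        fun d => 2550 * (likelihoodRatio n e m d ^ 2 +
          ((-2) * likelihoodRatio n e m d + 1)) := by
      funext d
      ring
    rw [hexp, distinctAvg_const_mul, distinctAvg_add, distinctAvg_add,
      distinctAvg_const_mul, distinctAvg_likelihoodRatio hn hr hrn hm.le,
      distinctAvg_one hr]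
    linarith
  constructor
  · rw [distinctAvg_eq_likelihoodRatio_mul hn hr hrn hm.le]
    exact (distinctAvg_mono fun d _ => likelihoodRatio_mul_ratioFar_le n e m d).trans hchi
  · exact (distinctAvg_mono fun d _ => ratioFar_le n e m d).trans hchi

/-- The joint law of `N` and the samples bounds the (outer) probability of `N = r`
together with an event about the number of distinct samples. -/
lemma measure_distinct_le {Ω : Type} [MeasurableSpace Ω] (μ : Measure Ω) {r m : ℕ}
    (hr : 0 < r) (N : Ω → ℕ) (X : Fin m → Ω → ℕ)
    (hX : ∀ v : Fin m → ℕ, μ {ω | N ω = r ∧ ∀ i, X i ω = v i} =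
      if ∀ i, v i < r then (1 / 2) * ((r : ENNReal))⁻¹ ^ m else 0)
    (p : ℕ → Prop) [DecidablePred p] {δ : ℝ}
    (hδ : distinctAvg r m (fun d => if p d then 1 else 0) ≤ δ) :
    μ {ω | N ω = r ∧ p (Finset.univ.image (fun i => X i ω)).card} ≤
      (1 / 2) * ENNReal.ofReal δ := by
  set B : Finset (Fin m → Fin r) :=
    Finset.univ.filter fun v => p (Finset.univ.image v).card with hB
  have hsub : {ω | N ω = r ∧ p (Finset.univ.image (fun i => X i ω)).card} ⊆
      (⋃ v ∈ B, {ω | N ω = r ∧ ∀ i, X i ω = (v i : ℕ)}) ∪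
      ⋃ v : {v : Fin m → ℕ // ¬ ∀ i, v i < r}, {ω | N ω = r ∧ ∀ i, X i ω = v.1 i} := by
    rintro ω ⟨hN, hp⟩
    by_cases h : ∀ i, X i ω < r
    · left
      simp only [Set.mem_iUnion]
      refine ⟨fun i => ⟨X i ω, h i⟩, ?_, hN, fun i => rfl⟩
      rw [hB, Finset.mem_filter]
      refine ⟨Finset.mem_univ _, ?_⟩
      rw [← Finset.card_image_of_injective _ Fin.val_injective, Finset.image_image]
      exact hp
    · right
      exact Set.mem_iUnion.2 ⟨⟨fun i => X i ω, h⟩, hN, fun i => rfl⟩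
  have hnull : μ (⋃ v : {v : Fin m → ℕ // ¬ ∀ i, v i < r},
      {ω | N ω = r ∧ ∀ i, X i ω = v.1 i}) = 0 :=
    measure_iUnion_null fun v => by rw [hX, if_neg v.2]
  have hcard : (B.card : ENNReal) * (r : ENNReal)⁻¹ ^ m ≤ ENNReal.ofReal δ := by
    have hreal : (B.card : ℝ) / (r : ℝ) ^ m ≤ δ := by
      simpa [distinctAvg, hB, Finset.sum_boole] using hδ
    refine le_trans (le_of_eq ?_) (ENNReal.ofReal_le_ofReal hreal)
    rw [ENNReal.ofReal_div_of_pos (by positivity), ENNReal.ofReal_pow (by positivity),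
      ENNReal.ofReal_natCast, ENNReal.ofReal_natCast, ENNReal.div_eq_inv_mul,
      ENNReal.inv_pow, mul_comm]
  calc _ ≤ μ (⋃ v ∈ B, {ω | N ω = r ∧ ∀ i, X i ω = (v i : ℕ)}) + 0 := by
        rw [← hnull]
        exact (measure_mono hsub).trans (measure_union_le _ _)
    _ ≤ ∑ v ∈ B, μ {ω | N ω = r ∧ ∀ i, X i ω = (v i : ℕ)} := by
        rw [add_zero]
        exact measure_biUnion_finset_le _ _
    _ = (1 / 2) * ((B.card : ENNReal) * (r : ENNReal)⁻¹ ^ m) := by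
        rw [Finset.sum_congr rfl fun v _ => by rw [hX, if_pos fun i => (v i).2]]
        rw [Finset.sum_const, nsmul_eq_mul]
        ring
    _ ≤ _ := by gcongr

/-- (Likelihood-ratio concentration for set-size discrimination.)
For parameter sequences `(n_k, ε_k, m_k)` with `n_k → ∞`, `0 < ε_k < 1/3`,
`(1−ε_k)·n_k = n'_k` a positive integer, `m_k·ε_k/√(n_k) → 0` and `m_k/n_k → 0`,
the following holds for all `k` large enough.  Let `N` be `n_k` or `n'_k` each with
probability `1/2`; conditionally on `N`, draw `m_k` i.i.d. uniform samples from a set of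
size `N`, and let `ℓ` be the number of distinct samples.  Then the likelihood ratio
`R(ℓ) = (1−ε_k)^{m_k−ℓ} · Π_{i=1}^{ℓ−1} (1 − i/n_k)/(1 − i/((1−ε_k)·n_k))` lies in
`[98/100, 100/98]` with probability at least `99/100`. -/
theorem set_size_likelihood_ratio_concentration
    (n n' m : ℕ → ℕ) (ε : ℕ → ℝ)
    (hε : ∀ k, 0 < ε k ∧ ε k < 1 / 3)
    (hn' : ∀ k, 0 < n' k ∧ ((n' k : ℝ) = (1 - ε k) * n k))
    (hn : Tendsto (fun k => (n k : ℝ)) atTop atTop)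
    (hm1 : Tendsto (fun k => (m k : ℝ) * ε k / Real.sqrt (n k)) atTop (nhds 0))
    (hm2 : Tendsto (fun k => (m k : ℝ) / (n k : ℝ)) atTop (nhds 0)) :
    ∀ᶠ k in atTop,
      ∀ (Ω : Type) (_ : MeasurableSpace Ω) (μ : Measure Ω) (_ : IsProbabilityMeasure μ)
        (N : Ω → ℕ) (X : Fin (m k) → Ω → ℕ),
        (∀ ω, N ω = n k ∨ N ω = n' k) →
        (∀ r : ℕ, (r = n k ∨ r = n' k) → ∀ v : Fin (m k) → ℕ,
          μ {ω | N ω = r ∧ ∀ i, X i ω = v i} =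
            if ∀ i, v i < r then (1 / 2) * ((r : ENNReal))⁻¹ ^ (m k) else 0) →
        ∀ R : ℕ → ℝ,
          (∀ l : ℕ, R l = (1 - ε k) ^ (m k - l) *
            ∏ i ∈ Finset.Ico 1 l,
              (1 - (i : ℝ) / (n k)) / (1 - (i : ℝ) / ((1 - ε k) * n k))) →
        ∀ ℓ : Ω → ℕ,
          (∀ ω, ℓ ω = (Finset.univ.image (fun i => X i ω)).card) →
        (99 / 100 : ENNReal) ≤
          μ {ω | 98 / 100 ≤ R (ℓ ω) ∧ R (ℓ ω) ≤ 100 / 98} := by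
  have hev1 : ∀ᶠ k in atTop, |(m k : ℝ) * ε k / Real.sqrt (n k)| < 1 / 2000 := by
    exact hm1.abs.eventually_lt_const (by norm_num)
  have hev2 : ∀ᶠ k in atTop, (m k : ℝ) / (n k : ℝ) < 1 / 6 :=
    hm2.eventually_lt_const (by norm_num)
  filter_upwards [hev1, hev2] with k h1 h2 Ω _ μ _ N X hN hX R hR ℓ hℓ
  obtain ⟨he0, he1⟩ := hε k
  obtain ⟨hr, hrn⟩ := hn' k
  have hn0 : 0 < n k := by
    rcases Nat.eq_zero_or_pos (n k) with h | h
    · rw [h, Nat.cast_zero, mul_zero, Nat.cast_eq_zero] at hrn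
      omega
    · exact h
  have hnR : (0 : ℝ) < n k := by exact_mod_cast hn0
  rw [div_lt_iff₀ hnR] at h2
  have hgap : (n k : ℝ) / 2 ≤ n' k - m k := by
    rw [hrn]
    nlinarith
  have hmr : m k < n' k := by
    have : (m k : ℝ) < n' k := by linarith
    exact_mod_cast this
  have hsmall : ε k ^ 2 * (m k : ℝ) ^ 2 / (n' k - m k) ≤ 1 / 1000000 := by
    have hsq : ((m k : ℝ) * ε k / Real.sqrt (n k)) ^ 2 ≤ (1 / 2000) ^ 2 :=
      sq_le_sq' (abs_lt.1 h1).1.le (abs_lt.1 h1).2.le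
    rw [div_pow, Real.sq_sqrt hnR.le, div_le_iff₀ hnR] at hsq
    rw [div_le_iff₀ (by linarith)]
    nlinarith
  have hR' : R = likelihoodRatio (n k) (ε k) (m k) := funext hR
  obtain ⟨hfar, hfar'⟩ := distinctAvg_ratioFar_le hn0 hr hrn hmr hsmall
  classical
  set p : ℕ → Prop := fun l => ¬ (98 / 100 ≤ R l ∧ R l ≤ 100 / 98) with hp
  have hind : ratioFar (n k) (ε k) (m k) = fun l => if p l then 1 else 0 := by
    funext l
    simp only [ratioFar, hp, hR', ite_not]
  rw [hind] at hfar hfar'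
  have hb := measure_distinct_le μ hn0 N X (hX _ (Or.inl rfl)) p hfar
  have hb' := measure_distinct_le μ hr N X (hX _ (Or.inr rfl)) p hfar'
  set G : Set Ω := {ω | 98 / 100 ≤ R (ℓ ω) ∧ R (ℓ ω) ≤ 100 / 98} with hG
  have hbad : μ Gᶜ ≤ 1 / 100 := by
    have hsub : Gᶜ ⊆ {ω | N ω = n k ∧ p (Finset.univ.image (fun i => X i ω)).card} ∪
        {ω | N ω = n' k ∧ p (Finset.univ.image (fun i => X i ω)).card} := by
      intro ω hω
      have hpω : p (Finset.univ.image (fun i => X i ω)).card := by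
        rw [← hℓ]
        exact hω
      exact (hN ω).imp (fun h => ⟨h, hpω⟩) (fun h => ⟨h, hpω⟩)
    refine (measure_mono hsub).trans ((measure_union_le _ _).trans
      ((add_le_add hb hb').trans (le_of_eq ?_)))
    rw [← add_mul, ENNReal.add_halves, one_mul, ENNReal.ofReal_div_of_pos (by norm_num)]
    simp
  have htotal : 1 ≤ μ G + 1 / 100 := by
    calc (1 : ENNReal) = μ (G ∪ Gᶜ) := by rw [Set.union_compl_self, measure_univ]
      _ ≤ μ G + μ Gᶜ := measure_union_le _ _
      _ ≤ _ := by gcongr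
  have hsum : (99 / 100 : ENNReal) + 1 / 100 = 1 := by
    rw [← ENNReal.add_div]
    norm_num
    exact ENNReal.div_self (by norm_num) (by norm_num)
  have hfin : (1 / 100 : ENNReal) ≠ ⊤ := ENNReal.div_ne_top (by norm_num) (by norm_num)
  exact (ENNReal.add_le_add_iff_right hfin).1 (hsum.le.trans htotal)
end

section
/- For every sequence of parameters (p_k, ε_k, m_k) with p_k → 0, 0 < ε_k < p_k, and m_k·ε_k²/p_k → 0, the following holds for all k large enough. Let q be a random bias equal to p_k with probability 1/2 and to p_k − ε_k otherwise; conditionally on q, let ℓ ~ Bin(m_k, q). Define the likelihood ratio R(ℓ) = p_k^ℓ (1−p_k)^{m_k−ℓ} / ( (p_k−ε_k)^ℓ (1−p_k+ε_k)^{m_k−ℓ} ). Then P( 98/100 ≤ R(ℓ) ≤ 100/98 ) ≥ 99/100. -/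
open MeasureTheory ProbabilityTheory Filter

/-- If the ratio of two positive weights lies outside `[98/100, 100/98]`, their mean is controlled by
the corresponding summand of the chi-squared divergence. -/
theorem half_add_le_of_ratio_notMem {a b : ℝ} (ha : 0 < a) (hb : 0 < b)
    (h : ¬ (98 / 100 ≤ a / b ∧ a / b ≤ 100 / 98)) :
    (a + b) / 2 ≤ 2500 * ((a - b) ^ 2 / a) := by
  rw [le_div_iff₀ hb, div_le_iff₀ hb] at h
  rw [mul_div_assoc', le_div_iff₀ ha]
  by_cases h1 : 98 / 100 * b ≤ a
  · have h2 : 100 / 98 * b < a := not_le.mp fun h2 => h ⟨h1, h2⟩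
    nlinarith [mul_pos ha hb]
  · nlinarith [mul_pos ha hb]

/-- The second moment of the likelihood ratio of two binomial distributions. -/
theorem sum_choose_mul_sq_div {p r : ℝ} (hp : 0 < p) (hp1 : p < 1) (m : ℕ) :
    ∑ j ∈ Finset.range (m + 1), (m.choose j : ℝ) *
        ((r ^ j * (1 - r) ^ (m - j)) ^ 2 / (p ^ j * (1 - p) ^ (m - j))) =
      (1 + (p - r) ^ 2 / (p * (1 - p))) ^ m := by
  have h1p : 0 < 1 - p := sub_pos.mpr hp1
  have hbase : 1 + (p - r) ^ 2 / (p * (1 - p)) = r ^ 2 / p + (1 - r) ^ 2 / (1 - p) := by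
    field_simp
    ring
  rw [hbase, add_pow]
  refine Finset.sum_congr rfl fun j _ => ?_
  rw [div_pow, div_pow, mul_pow, ← pow_mul, ← pow_mul, ← pow_mul, ← pow_mul, mul_comm 2,
    mul_comm 2, div_mul_div_comm, mul_comm]

/-- The total weight of a binomial distribution. -/
theorem sum_choose_mul_pow (r : ℝ) (m : ℕ) :
    ∑ j ∈ Finset.range (m + 1), (m.choose j : ℝ) * (r ^ j * (1 - r) ^ (m - j)) = 1 := by
  have h := add_pow r (1 - r) m
  rw [add_sub_cancel, one_pow] at h
  exact (Finset.sum_congr rfl fun j _ => mul_comm _ _).trans h.symm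

/-- The chi-squared divergence between two binomial distributions. -/
theorem sum_choose_mul_sub_sq_div {p r : ℝ} (hp : 0 < p) (hp1 : p < 1) (m : ℕ) :
    ∑ j ∈ Finset.range (m + 1), (m.choose j : ℝ) *
        ((p ^ j * (1 - p) ^ (m - j) - r ^ j * (1 - r) ^ (m - j)) ^ 2 /
          (p ^ j * (1 - p) ^ (m - j))) =
      (1 + (p - r) ^ 2 / (p * (1 - p))) ^ m - 1 := by
  have h1p : 0 < 1 - p := sub_pos.mpr hp1
  have hterm : ∀ j ∈ Finset.range (m + 1), (m.choose j : ℝ) *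
        ((p ^ j * (1 - p) ^ (m - j) - r ^ j * (1 - r) ^ (m - j)) ^ 2 /
          (p ^ j * (1 - p) ^ (m - j))) =
      (m.choose j : ℝ) * (p ^ j * (1 - p) ^ (m - j)) -
        2 * ((m.choose j : ℝ) * (r ^ j * (1 - r) ^ (m - j))) +
        (m.choose j : ℝ) *
          ((r ^ j * (1 - r) ^ (m - j)) ^ 2 / (p ^ j * (1 - p) ^ (m - j))) := by
    intro j _
    have ha : 0 < p ^ j * (1 - p) ^ (m - j) := by positivity
    generalize p ^ j * (1 - p) ^ (m - j) = a at ha ⊢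
    field_simp
    ring
  rw [Finset.sum_congr rfl hterm, Finset.sum_add_distrib, Finset.sum_sub_distrib,
    ← Finset.mul_sum, sum_choose_mul_pow, sum_choose_mul_pow, sum_choose_mul_sq_div hp hp1]
  ring

/-- The chi-squared divergence between two binomial distributions is small when
`m (p - r)² / p` is. -/
theorem one_add_sq_div_pow_sub_one_le {p d : ℝ} (hp : 0 < p) (hp2 : p ≤ 1 / 2) {m : ℕ}
    (hm : (m : ℝ) * d ^ 2 / p ≤ 1 / 1000000) :
    (1 + d ^ 2 / (p * (1 - p))) ^ m - 1 ≤ 1 / 250000 := by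
  have hx : d ^ 2 / (p * (1 - p)) ≤ 2 * (d ^ 2 / p) := by
    rw [mul_div_assoc', div_le_div_iff₀ (by nlinarith) hp]
    nlinarith [mul_nonneg (sq_nonneg d) hp.le,
      mul_nonneg (mul_nonneg (sq_nonneg d) hp.le) (by linarith : 0 ≤ 1 - 2 * p)]
  have hx0 : 0 ≤ d ^ 2 / (p * (1 - p)) :=
    div_nonneg (sq_nonneg d) (by nlinarith)
  have hmx : (m : ℝ) * (d ^ 2 / (p * (1 - p))) ≤ 1 / 500000 := by
    calc (m : ℝ) * (d ^ 2 / (p * (1 - p))) ≤ m * (2 * (d ^ 2 / p)) := by gcongr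
      _ = 2 * (m * d ^ 2 / p) := by ring
      _ ≤ 1 / 500000 := by linarith
  have hexp : (1 + d ^ 2 / (p * (1 - p))) ^ m ≤ Real.exp (1 / 500000) := by
    calc (1 + d ^ 2 / (p * (1 - p))) ^ m ≤ Real.exp (d ^ 2 / (p * (1 - p))) ^ m := by
          gcongr
          linarith [Real.add_one_le_exp (d ^ 2 / (p * (1 - p)))]
      _ = Real.exp (m * (d ^ 2 / (p * (1 - p)))) := (Real.exp_nat_mul _ _).symm
      _ ≤ Real.exp (1 / 500000) := Real.exp_le_exp.mpr hmx
  have hsmall := Real.abs_exp_sub_one_le (x := 1 / 500000) (by norm_num [abs_of_pos])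
  rw [abs_of_pos (by norm_num : (0 : ℝ) < 1 / 500000)] at hsmall
  linarith [le_abs_self (Real.exp (1 / 500000) - 1)]

/-- The set of outcomes whose image under `f : Ω → ℕ` satisfies `P` has measure at most the sum of
the bounds on the fibres, without measurability of `f`. -/
theorem measure_setOf_le_sum {Ω : Type*} [MeasurableSpace Ω] (μ : Measure Ω) (f : Ω → ℕ)
    (P : ℕ → Prop) (n : ℕ) (w : ℕ → ℝ) (hw : ∀ j ∈ Finset.range n, 0 ≤ w j)
    (hle : ∀ j ∈ Finset.range n, P j → μ {ω | f ω = j} ≤ ENNReal.ofReal (w j))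
    (hnull : ∀ j ∉ Finset.range n, μ {ω | f ω = j} = 0) :
    μ {ω | P (f ω)} ≤ ENNReal.ofReal (∑ j ∈ Finset.range n, w j) := by
  have hsub : {ω | P (f ω)} ⊆ ⋃ j, {ω | P j ∧ f ω = j} := fun ω hω =>
    Set.mem_iUnion.mpr ⟨f ω, hω, rfl⟩
  calc μ {ω | P (f ω)} ≤ ∑' j, μ {ω | P j ∧ f ω = j} :=
        (measure_mono hsub).trans (measure_iUnion_le _)
    _ = ∑ j ∈ Finset.range n, μ {ω | P j ∧ f ω = j} :=
        tsum_eq_sum fun j hj => measure_mono_null (fun _ h => h.2) (hnull j hj)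
    _ ≤ ∑ j ∈ Finset.range n, ENNReal.ofReal (w j) := by
        refine Finset.sum_le_sum fun j hj => ?_
        by_cases hP : P j
        · exact (measure_mono fun _ h => h.2).trans (hle j hj hP)
        · simp [hP]
    _ = ENNReal.ofReal (∑ j ∈ Finset.range n, w j) :=
        (ENNReal.ofReal_sum_of_nonneg hw).symm

/-- (Likelihood-ratio concentration for Bernoulli-bias discrimination.)
For parameter sequences `(p_k, ε_k, m_k)` with `p_k → 0`, `0 < ε_k < p_k` and
`m_k·ε_k²/p_k → 0`, the following holds for all `k` large enough.  Let the bias `q` be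
`p_k` or `p_k − ε_k` each with probability `1/2`, and conditionally on `q` let
`ℓ ~ Bin(m_k, q)`.  Then the likelihood ratio
`R(ℓ) = p_k^ℓ (1−p_k)^{m_k−ℓ} / ((p_k−ε_k)^ℓ (1−p_k+ε_k)^{m_k−ℓ})` lies in
`[98/100, 100/98]` with probability at least `99/100`. -/
theorem bernoulli_likelihood_ratio_concentration
    (p ε : ℕ → ℝ) (m : ℕ → ℕ)
    (hp : Tendsto p atTop (nhds 0))
    (hε : ∀ k, 0 < ε k ∧ ε k < p k)
    (hm : Tendsto (fun k => (m k : ℝ) * (ε k) ^ 2 / p k) atTop (nhds 0)) :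
    ∀ᶠ k in atTop,
      ∀ (Ω : Type) (_ : MeasurableSpace Ω) (μ : Measure Ω) (_ : IsProbabilityMeasure μ)
        (q : Ω → ℝ) (ℓ : Ω → ℕ),
        (∀ ω, q ω = p k ∨ q ω = p k - ε k) →
        (∀ j : ℕ, μ {ω | q ω = p k ∧ ℓ ω = j} =
          (1 / 2) * ENNReal.ofReal
            (((m k).choose j : ℝ) * (p k) ^ j * (1 - p k) ^ (m k - j))) →
        (∀ j : ℕ, μ {ω | q ω = p k - ε k ∧ ℓ ω = j} =
          (1 / 2) * ENNReal.ofReal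
            (((m k).choose j : ℝ) * (p k - ε k) ^ j * (1 - p k + ε k) ^ (m k - j))) →
        ∀ R : ℕ → ℝ,
          (∀ l : ℕ, R l = (p k) ^ l * (1 - p k) ^ (m k - l) /
            ((p k - ε k) ^ l * (1 - p k + ε k) ^ (m k - l))) →
        (99 / 100 : ENNReal) ≤
          μ {ω | 98 / 100 ≤ R (ℓ ω) ∧ R (ℓ ω) ≤ 100 / 98} := by
  filter_upwards [hp.eventually_le_const (show (0 : ℝ) < 1 / 2 by norm_num),
    hm.eventually_le_const (show (0 : ℝ) < 1 / 1000000 by norm_num)] with k hpk hmk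
  intro Ω _ μ _ q ℓ hq h₁ h₂ R hR
  obtain ⟨hε0, hεp⟩ := hε k
  generalize p k = p, ε k = ε, m k = m at *
  have hp0 : 0 < p := hε0.trans hεp
  have h1p : 0 < 1 - p := by linarith
  have hr0 : 0 < p - ε := sub_pos.mpr hεp
  have hone_sub : 1 - p + ε = 1 - (p - ε) := by ring
  have h1r : 0 < 1 - (p - ε) := by linarith
  simp only [hone_sub, mul_assoc] at h₁ h₂ hR
  have hfibre : ∀ j, μ {ω | ℓ ω = j} ≤ ENNReal.ofReal ((m.choose j : ℝ) *
      ((p ^ j * (1 - p) ^ (m - j) + (p - ε) ^ j * (1 - (p - ε)) ^ (m - j)) / 2)) := by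
    intro j
    have hsub : {ω | ℓ ω = j} ⊆
        {ω | q ω = p ∧ ℓ ω = j} ∪ {ω | q ω = p - ε ∧ ℓ ω = j} := fun ω hω =>
      (hq ω).imp (fun h => ⟨h, hω⟩) (fun h => ⟨h, hω⟩)
    refine ((measure_mono hsub).trans (measure_union_le _ _)).trans_eq ?_
    have hhalf : (1 / 2 : ENNReal) = ENNReal.ofReal (1 / 2) := by
      rw [ENNReal.ofReal_div_of_pos two_pos, ENNReal.ofReal_one, ENNReal.ofReal_ofNat]
    rw [h₁, h₂, hhalf, ← ENNReal.ofReal_mul (by norm_num), ← ENNReal.ofReal_mul (by norm_num),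
      ← ENNReal.ofReal_add (by positivity) (by positivity)]
    congr 1
    ring
  have hbad : μ {ω | ¬ (98 / 100 ≤ R (ℓ ω) ∧ R (ℓ ω) ≤ 100 / 98)} ≤
      ENNReal.ofReal (1 / 100) := by
    refine (measure_setOf_le_sum μ ℓ (fun j => ¬ (98 / 100 ≤ R j ∧ R j ≤ 100 / 98)) (m + 1)
      (fun j => 2500 * ((m.choose j : ℝ) *
        ((p ^ j * (1 - p) ^ (m - j) - (p - ε) ^ j * (1 - (p - ε)) ^ (m - j)) ^ 2 /
          (p ^ j * (1 - p) ^ (m - j)))))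
      (fun j _ => by positivity) (fun j _ hj => (hfibre j).trans ?_) fun j hj => ?_).trans ?_
    · refine ENNReal.ofReal_le_ofReal ?_
      rw [hR] at hj
      rw [mul_left_comm]
      gcongr
      exact half_add_le_of_ratio_notMem (by positivity) (by positivity) hj
    · have hmj : m < j := by simpa using hj
      simpa [Nat.choose_eq_zero_of_lt hmj] using hfibre j
    · refine ENNReal.ofReal_le_ofReal ?_
      rw [← Finset.mul_sum, sum_choose_mul_sub_sq_div hp0 (by linarith), sub_sub_cancel]
      linarith [one_add_sq_div_pow_sub_one_le hp0 hpk hmk]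
  have hcover : 1 ≤ μ {ω | 98 / 100 ≤ R (ℓ ω) ∧ R (ℓ ω) ≤ 100 / 98} +
      ENNReal.ofReal (1 / 100) := by
    calc 1 = μ Set.univ := measure_univ.symm
      _ ≤ _ := measure_univ_le_add_compl _
      _ ≤ _ := by gcongr; exact hbad
  have hsplit : (99 / 100 : ENNReal) = 1 - ENNReal.ofReal (1 / 100) := by
    rw [← ENNReal.ofReal_one, ← ENNReal.ofReal_sub _ (by norm_num),
      show (1 : ℝ) - 1 / 100 = 99 / 100 by norm_num, ENNReal.ofReal_div_of_pos (by norm_num),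
      ENNReal.ofReal_ofNat, ENNReal.ofReal_ofNat]
  rw [hsplit]
  exact tsub_le_iff_right.mpr hcover
end

section
/- Let n ≥ 2 and let X₁, X₂, … be i.i.d. random variables, each uniformly distributed on a finite set of size n. For 1 ≤ ℓ ≤ n, let T_ℓ = min{ i : |{X₁, …, X_i}| = ℓ } be the first time ℓ distinct elements have been sampled. Then P( ∃ ℓ ∈ {1, …, n−1} : T_{ℓ+1} − T_ℓ > 4·ℓ·ln(3ℓ) ) ≤ 1/3. Consequently, with probability at least 2/3, the sampling process that stops after ⌈4s·ln(3s)⌉ consecutive samples yield no new element (where s is the current number of distinct elements seen) outputs the entire set. -/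
open MeasureTheory ProbabilityTheory

/-- A set whose outer measure and that of its complement add up to at most one is
null-measurable for a probability measure. -/
theorem nullMeasurableSet_of_measure_add_compl_le_one {Ω : Type*} [MeasurableSpace Ω]
    {μ : Measure Ω} [IsProbabilityMeasure μ] {A : Set Ω} (h : μ A + μ Aᶜ ≤ 1) :
    NullMeasurableSet A μ := by
  have hcover : toMeasurable μ A ∪ toMeasurable μ Aᶜ = Set.univ := by
    refine Set.eq_univ_of_forall fun ω => ?_
    by_cases hω : ω ∈ A
    · exact Or.inl (subset_toMeasurable μ A hω)
    · exact Or.inr (subset_toMeasurable μ Aᶜ hω)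
  have hinter : μ (toMeasurable μ A ∩ toMeasurable μ Aᶜ) = 0 := by
    have hadd := measure_union_add_inter (μ := μ) (toMeasurable μ A)
      (measurableSet_toMeasurable μ Aᶜ)
    rw [hcover, measure_univ, measure_toMeasurable, measure_toMeasurable] at hadd
    have hle : 1 + μ (toMeasurable μ A ∩ toMeasurable μ Aᶜ) ≤ 1 + 0 := by
      rw [hadd, add_zero]; exact h
    exact le_antisymm ((ENNReal.add_le_add_iff_left ENNReal.one_ne_top).1 hle) zero_le
  have hdiff : μ (toMeasurable μ A \ A) = 0 :=
    measure_mono_null (Set.inter_subset_inter_right _ (subset_toMeasurable μ Aᶜ)) hinter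
  refine (measurableSet_toMeasurable μ A).nullMeasurableSet.congr ?_
  exact (ae_le_set.2 hdiff).antisymm (subset_toMeasurable μ A).eventuallyLE

theorem image_prefix_filter_lt {U : Type*} [DecidableEq U] (x : ℕ → U) {t j : ℕ} (hj : j ≤ t) :
    (Finset.univ.filter fun i : Fin t => i.1 < j).image (fun i : Fin t => x i) =
      (Finset.range j).image x := by
  ext u
  simp only [Finset.mem_image, Finset.mem_filter, Finset.mem_univ, true_and, Finset.mem_range]
  exact ⟨fun ⟨i, hi, h⟩ => ⟨i, hi, h⟩, fun ⟨i, hi, h⟩ => ⟨⟨i, hi.trans_le hj⟩, hi, h⟩⟩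

section Uniform

variable {Ω U : Type*} [MeasurableSpace Ω] {μ : Measure Ω} {n : ℕ} {X : ℕ → Ω → U}

theorem measure_prefix_mem_le
    (hlaw : ∀ (k : ℕ) (v : Fin k → U),
      μ {ω | ∀ i : Fin k, X i.1 ω = v i} = ((n : ENNReal))⁻¹ ^ k)
    {k : ℕ} (Q : Finset (Fin k → U)) :
    μ {ω | (fun i : Fin k => X i ω) ∈ Q} ≤ Q.card * (n : ENNReal)⁻¹ ^ k := by
  calc μ {ω | (fun i : Fin k => X i ω) ∈ Q}
      ≤ μ (⋃ v ∈ Q, {ω | ∀ i : Fin k, X i.1 ω = v i}) := by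
        refine measure_mono fun ω hω => ?_
        simp only [Set.mem_iUnion]
        exact ⟨_, hω, fun i => rfl⟩
    _ ≤ ∑ v ∈ Q, μ {ω | ∀ i : Fin k, X i.1 ω = v i} := measure_biUnion_finset_le _ _
    _ = Q.card * (n : ENNReal)⁻¹ ^ k := by simp [hlaw]

variable [Fintype U]

theorem card_mul_add_card_compl_mul (hn : n ≠ 0) (hcard : Fintype.card U = n) {k : ℕ}
    [DecidableEq (Fin k → U)] (Q : Finset (Fin k → U)) :
    (Q.card * (n : ENNReal)⁻¹ ^ k) + (Qᶜ.card * (n : ENNReal)⁻¹ ^ k) = 1 := by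
  rw [← add_mul, ← Nat.cast_add, Finset.card_add_card_compl, Fintype.card_fun, hcard,
    Fintype.card_fin, Nat.cast_pow, ← mul_pow, ENNReal.mul_inv_cancel (by simpa using hn) (by simp),
    one_pow]

variable [IsProbabilityMeasure μ]

theorem nullMeasurableSet_prefix_mem (hn : n ≠ 0) (hcard : Fintype.card U = n)
    (hlaw : ∀ (k : ℕ) (v : Fin k → U),
      μ {ω | ∀ i : Fin k, X i.1 ω = v i} = ((n : ENNReal))⁻¹ ^ k)
    {k : ℕ} (Q : Finset (Fin k → U)) :
    NullMeasurableSet {ω | (fun i : Fin k => X i ω) ∈ Q} μ := by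
  classical
  refine nullMeasurableSet_of_measure_add_compl_le_one ?_
  rw [← card_mul_add_card_compl_mul hn hcard Q]
  refine add_le_add (measure_prefix_mem_le hlaw Q) ?_
  have hcompl : {ω | (fun i : Fin k => X i ω) ∈ Q}ᶜ = {ω | (fun i : Fin k => X i ω) ∈ Qᶜ} :=
    Set.ext fun ω => Finset.mem_compl.symm
  exact hcompl ▸ measure_prefix_mem_le hlaw Qᶜ

theorem card_mul_le_measure_prefix_mem (hn : n ≠ 0) (hcard : Fintype.card U = n)
    (hlaw : ∀ (k : ℕ) (v : Fin k → U),
      μ {ω | ∀ i : Fin k, X i.1 ω = v i} = ((n : ENNReal))⁻¹ ^ k)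
    {k : ℕ} (Q : Finset (Fin k → U)) :
    Q.card * (n : ENNReal)⁻¹ ^ k ≤ μ {ω | (fun i : Fin k => X i ω) ∈ Q} := by
  classical
  have hfin : (Qᶜ.card : ENNReal) * (n : ENNReal)⁻¹ ^ k ≠ ⊤ := by
    refine ENNReal.mul_ne_top (by simp) (ENNReal.pow_ne_top ?_)
    simpa using hn
  refine (ENNReal.add_le_add_iff_right hfin).1 ?_
  rw [card_mul_add_card_compl_mul hn hcard Q, ← measure_univ (μ := μ)]
  calc μ Set.univ
      ≤ μ ({ω | (fun i : Fin k => X i ω) ∈ Q} ∪ {ω | (fun i : Fin k => X i ω) ∈ Qᶜ}) := by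
        refine measure_mono fun ω _ => ?_
        simpa using em _
    _ ≤ _ := (measure_union_le _ _).trans (add_le_add le_rfl (measure_prefix_mem_le hlaw Qᶜ))

/-- Conditionally on any event about the first `t` samples forcing exactly `l` distinct values,
the next `m` samples all repeat earlier values with probability at most `(l / n) ^ m`. -/
theorem measure_prefix_mem_and_repeat_le [DecidableEq U] (hn : n ≠ 0)
    (hcard : Fintype.card U = n)
    (hlaw : ∀ (k : ℕ) (v : Fin k → U),
      μ {ω | ∀ i : Fin k, X i.1 ω = v i} = ((n : ENNReal))⁻¹ ^ k)
    {t l : ℕ} (m : ℕ) (Q : Finset (Fin t → U))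
    (hQ : ∀ v ∈ Q, (Finset.univ.image v).card = l) :
    μ {ω | (fun i : Fin t => X i ω) ∈ Q ∧
        ∀ j < m, X (t + j) ω ∈ (Finset.range t).image fun i => X i ω} ≤
      ((l : ENNReal) * (n : ENNReal)⁻¹) ^ m * μ {ω | (fun i : Fin t => X i ω) ∈ Q} := by
  classical
  let R : Finset (Fin (t + m) → U) := Q.biUnion fun v =>
    (Fintype.piFinset fun _ : Fin m => Finset.univ.image v).image fun w => Fin.append v w
  have hR : R.card ≤ Q.card * l ^ m := by
    refine Finset.card_biUnion_le_card_mul _ _ _ fun v hv => Finset.card_image_le.trans ?_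
    rw [Fintype.card_piFinset_const, hQ v hv]
  calc _ ≤ μ {ω | (fun i : Fin (t + m) => X i ω) ∈ R} := by
        refine measure_mono fun ω hω => ?_
        refine Finset.mem_biUnion.2 ⟨_, hω.1, Finset.mem_image.2
          ⟨fun j => X (t + j) ω, Fintype.mem_piFinset.2 fun j => ?_, ?_⟩⟩
        · obtain ⟨i, hi, hij⟩ := Finset.mem_image.1 (hω.2 j j.2)
          exact Finset.mem_image.2 ⟨⟨i, Finset.mem_range.1 hi⟩, Finset.mem_univ _, hij⟩
        · ext i
          refine Fin.addCases (fun i => ?_) (fun i => ?_) i <;> simp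
    _ ≤ R.card * (n : ENNReal)⁻¹ ^ (t + m) := measure_prefix_mem_le hlaw R
    _ ≤ ((Q.card * l ^ m : ℕ) : ENNReal) * (n : ENNReal)⁻¹ ^ (t + m) := by gcongr
    _ = ((l : ENNReal) * (n : ENNReal)⁻¹) ^ m * (Q.card * (n : ENNReal)⁻¹ ^ t) := by
        push_cast; ring
    _ ≤ _ := by gcongr; exact card_mul_le_measure_prefix_mem hn hcard hlaw Q

/-- The probability that the first `l` distinct values, once seen, are followed by `m` samples
without a new value is at most `(l / n) ^ m`. -/
theorem measure_exists_first_time_and_repeat_le [DecidableEq U] (hn : n ≠ 0)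
    (hcard : Fintype.card U = n)
    (hlaw : ∀ (k : ℕ) (v : Fin k → U),
      μ {ω | ∀ i : Fin k, X i.1 ω = v i} = ((n : ENNReal))⁻¹ ^ k) (l m : ℕ) :
    μ {ω | ∃ t, ((Finset.range t).image fun i => X i ω).card = l ∧
        (∀ j < t, ((Finset.range j).image fun i => X i ω).card ≠ l) ∧
        ∀ j < m, X (t + j) ω ∈ (Finset.range t).image fun i => X i ω} ≤
      ((l : ENNReal) * (n : ENNReal)⁻¹) ^ m := by
  classical
  let Q (t : ℕ) : Finset (Fin t → U) := Finset.univ.filter fun v =>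
    (Finset.univ.image v).card = l ∧
      ∀ j < t, ((Finset.univ.filter fun i : Fin t => i.1 < j).image v).card ≠ l
  let A (t : ℕ) : Set Ω := {ω | (fun i : Fin t => X i ω) ∈ Q t}
  have hA (t : ℕ) (ω : Ω) : ω ∈ A t ↔ ((Finset.range t).image fun i => X i ω).card = l ∧
      ∀ j < t, ((Finset.range j).image fun i => X i ω).card ≠ l := by
    have huniv : Finset.univ.image (fun i : Fin t => X i ω) =
        (Finset.range t).image fun i => X i ω := by
      rw [← image_prefix_filter_lt (fun i => X i ω) le_rfl]
      simp
    simp only [A, Q, Set.mem_ofPred_eq, Finset.mem_filter, Finset.mem_univ, true_and, huniv]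
    refine and_congr_right fun _ => forall₂_congr fun j hj => ?_
    rw [image_prefix_filter_lt (fun i => X i ω) hj.le]
  have hdisj : Pairwise (Function.onFun (AEDisjoint μ) A) := by
    intro s t hst
    refine (Set.disjoint_left.2 fun ω hs ht => ?_).aedisjoint
    rw [hA] at hs ht
    rcases hst.lt_or_gt with h | h
    · exact ht.2 s h hs.1
    · exact hs.2 t h ht.1
  calc _ ≤ μ (⋃ t, {ω | (fun i : Fin t => X i ω) ∈ Q t ∧
        ∀ j < m, X (t + j) ω ∈ (Finset.range t).image fun i => X i ω}) := by
        refine measure_mono fun ω ⟨t, h₁, h₂, h₃⟩ => Set.mem_iUnion.2 ⟨t, ?_, h₃⟩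
        exact (hA t ω).2 ⟨h₁, h₂⟩
    _ ≤ ∑' t, ((l : ENNReal) * (n : ENNReal)⁻¹) ^ m * μ (A t) := by
        refine (measure_iUnion_le _).trans (ENNReal.tsum_le_tsum fun t => ?_)
        refine measure_prefix_mem_and_repeat_le hn hcard hlaw m (Q t) fun v hv => ?_
        exact (Finset.mem_filter.1 hv).2.1
    _ = ((l : ENNReal) * (n : ENNReal)⁻¹) ^ m * ∑' t, μ (A t) := ENNReal.tsum_mul_left
    _ ≤ ((l : ENNReal) * (n : ENNReal)⁻¹) ^ m * 1 := by
        gcongr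
        refine (tsum_meas_le_meas_iUnion_of_disjoint₀ μ
          (fun t => nullMeasurableSet_prefix_mem hn hcard hlaw (Q t)) hdisj).trans prob_le_one
    _ = _ := mul_one _

end Uniform

/-- If the first time with `l + 1` distinct values exceeds the first time with `l` distinct values
by more than `m`, then `m` samples repeating earlier values follow the latter. -/
theorem exists_first_time_and_repeat {U : Type*} [DecidableEq U] (x : ℕ → U) {l m : ℕ}
    (h : sInf {i | ((Finset.range i).image x).card = l} + m <
      sInf {i | ((Finset.range i).image x).card = l + 1}) :
    ∃ t, ((Finset.range t).image x).card = l ∧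
      (∀ j < t, ((Finset.range j).image x).card ≠ l) ∧
      ∀ j < m, x (t + j) ∈ (Finset.range t).image x := by
  set c : ℕ → ℕ := fun i => ((Finset.range i).image x).card with hc
  have hmono : Monotone c := fun i j hij =>
    Finset.card_le_card (Finset.image_subset_image (Finset.range_subset_range.2 hij))
  have hsucc (i : ℕ) : c (i + 1) ≤ c i + 1 := by
    simp only [hc, Finset.range_add_one, Finset.image_insert]
    exact Finset.card_insert_le _ _
  have hs : c (sInf {i | c i = l + 1}) = l + 1 :=
    Nat.sInf_mem (s := {i | c i = l + 1})
      (Nat.nonempty_of_pos_sInf (Nat.zero_le _ |>.trans_lt h))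
  have hexists : ∀ k, l ≤ c k → ∃ i, c i = l := by
    intro k
    induction k with
    | zero => intro hk; exact ⟨0, le_antisymm (by simp [hc]) hk⟩
    | succ k ih =>
      intro hk
      by_cases hk' : l ≤ c k
      · exact ih hk'
      · exact ⟨k + 1, by have := hsucc k; omega⟩
  have ht : c (sInf {i | c i = l}) = l :=
    Nat.sInf_mem (s := {i | c i = l}) (hexists _ (by rw [hs]; omega))
  set t := sInf {i | c i = l} with htdef
  refine ⟨t, ht, fun j hj => Nat.notMem_of_lt_sInf (s := {i | c i = l}) hj, fun j hj => ?_⟩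
  have hle : t + (j + 1) < sInf {i | c i = l + 1} := by
    change t + m < sInf {i | c i = l + 1} at h
    omega
  have hne : c (t + (j + 1)) ≠ l + 1 :=
    Nat.notMem_of_lt_sInf (s := {i | c i = l + 1}) hle
  have hup : c (t + (j + 1)) ≤ l + 1 := hs ▸ hmono hle.le
  have heq : (Finset.range t).image x = (Finset.range (t + (j + 1))).image x := by
    refine Finset.eq_of_subset_of_card_le
      (Finset.image_subset_image (Finset.range_subset_range.2 (by omega))) ?_
    change c (t + (j + 1)) ≤ c t
    omega
  rw [heq]
  exact Finset.mem_image_of_mem x (Finset.mem_range.2 (by omega))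

theorem div_pow_floor_le {l n : ℕ} (hl : 1 ≤ l) (hln : l < n) :
    ((l : ℝ) / n) ^ ⌊(4 : ℝ) * l * Real.log (3 * l)⌋₊ ≤
      1 / 3 * ((l : ℝ)⁻¹ - ((l : ℝ) + 1)⁻¹) := by
  have hl0 : (1 : ℝ) ≤ l := by exact_mod_cast hl
  have hpos : (0 : ℝ) < l := by linarith
  have hln' : (l : ℝ) + 1 ≤ n := by exact_mod_cast hln
  have hbase : (l : ℝ) / n ≤ l / (l + 1) := by gcongr
  refine (pow_le_pow_left₀ (by positivity) hbase _).trans ?_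
  rcases hl.eq_or_lt with rfl | hl2
  · have hlog : (1 : ℝ) ≤ Real.log 3 := by
      rw [Real.le_log_iff_exp_le (by norm_num)]
      exact (Real.exp_one_lt_d9.trans (by norm_num)).le
    have hfloor : 4 ≤ ⌊(4 : ℝ) * (1 : ℕ) * Real.log (3 * (1 : ℕ))⌋₊ := by
      refine Nat.le_floor ?_
      norm_num
      linarith
    calc _ ≤ (((1 : ℕ) : ℝ) / ((1 : ℕ) + 1)) ^ 4 :=
          pow_le_pow_of_le_one (by norm_num) (by norm_num) hfloor
      _ ≤ _ := by norm_num
  · have hl2' : (2 : ℝ) ≤ l := by exact_mod_cast hl2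
    set m := ⌊(4 : ℝ) * l * Real.log (3 * l)⌋₊
    have hm : 4 * (l : ℝ) * Real.log (3 * l) ≤ m + 1 := (Nat.lt_floor_add_one _).le
    have hlog : 0 ≤ Real.log (3 * l) := Real.log_nonneg (by linarith)
    have hexp : (l : ℝ) / (l + 1) ≤ Real.exp (-((l : ℝ) + 1)⁻¹) := by
      have := Real.add_one_le_exp (-((l : ℝ) + 1)⁻¹)
      convert this using 1
      field_simp
      ring
    have hpow : ((l : ℝ) / (l + 1)) ^ (m + 1) ≤ ((3 * (l : ℝ)) ^ 2)⁻¹ := by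
      calc _ ≤ Real.exp (-((l : ℝ) + 1)⁻¹) ^ (m + 1) :=
            pow_le_pow_left₀ (by positivity) hexp _
        _ = Real.exp (-((m + 1) / ((l : ℝ) + 1))) := by
            rw [← Real.exp_nat_mul]; push_cast; ring_nf
        _ ≤ Real.exp (-(2 * Real.log (3 * l))) := by
            gcongr
            rw [le_div_iff₀ (by positivity)]
            nlinarith
        _ = _ := by
            rw [Real.exp_neg, mul_comm 2, Real.exp_mul, Real.exp_log (by positivity)]
            norm_num
    have hsplit : ((l : ℝ) / (l + 1)) ^ m = ((l : ℝ) / (l + 1)) ^ (m + 1) * ((l + 1) / l) := by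
      rw [pow_succ]; field_simp
    rw [hsplit]
    calc _ ≤ ((3 * (l : ℝ)) ^ 2)⁻¹ * (((l : ℝ) + 1) / l) := by gcongr
      _ ≤ 1 / 3 * ((l : ℝ)⁻¹ - ((l : ℝ) + 1)⁻¹) := by
        have heq : 1 / 3 * ((l : ℝ)⁻¹ - ((l : ℝ) + 1)⁻¹) = 1 / (3 * (l * (l + 1))) := by
          field_simp; ring
        rw [heq, inv_mul_eq_div, div_div, div_le_div_iff₀ (by positivity) (by positivity)]
        nlinarith [mul_pos hpos hpos]

theorem sum_div_pow_floor_le {n : ℕ} (hn : n ≠ 0) :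
    ∑ l ∈ Finset.Ico 1 n, ((l : ℝ) / n) ^ ⌊(4 : ℝ) * l * Real.log (3 * l)⌋₊ ≤ 1 / 3 := by
  calc _ ≤ ∑ l ∈ Finset.Ico 1 n, 1 / 3 * ((l : ℝ)⁻¹ - ((l : ℝ) + 1)⁻¹) :=
        Finset.sum_le_sum fun l hl =>
          div_pow_floor_le (Finset.mem_Ico.1 hl).1 (Finset.mem_Ico.1 hl).2
    _ = 1 / 3 * (1 - (n : ℝ)⁻¹) := by
        rw [← Finset.mul_sum]
        have := Finset.sum_Ico_sub (fun l : ℕ => -(l : ℝ)⁻¹) (Nat.one_le_iff_ne_zero.2 hn)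
        push_cast at this
        rw [inv_one] at this
        rw [show (1 : ℝ) - (n : ℝ)⁻¹ = -(n : ℝ)⁻¹ - -1 by ring, ← this]
        congr 1
        exact Finset.sum_congr rfl fun l _ => by ring
    _ ≤ 1 / 3 := by
        have : (0 : ℝ) ≤ (n : ℝ)⁻¹ := by positivity
        linarith

/-- (Coupon-collector waiting times.) Let `X₀, X₁, …` be i.i.d. uniform
samples from a set of size `n ≥ 2` and let `T_ℓ` be the first time at which `ℓ` distinct
elements have been sampled.  Then
`P(∃ ℓ ∈ {1, …, n−1} : T_{ℓ+1} − T_ℓ > 4·ℓ·ln(3ℓ)) ≤ 1/3`, so with probability at least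
`2/3` the stopping rule "stop after `4s·ln(3s)` consecutive samples with no new element"
retrieves the entire set. -/
theorem coupon_collector_waiting_times
    {Ω U : Type*} [MeasurableSpace Ω] (μ : Measure Ω) [IsProbabilityMeasure μ]
    [Fintype U] [DecidableEq U]
    (n : ℕ) (hn : 2 ≤ n) (hcard : Fintype.card U = n)
    (X : ℕ → Ω → U)
    (hlaw : ∀ (k : ℕ) (v : Fin k → U),
      μ {ω | ∀ i : Fin k, X i.1 ω = v i} = ((n : ENNReal))⁻¹ ^ k)
    (T : ℕ → Ω → ℕ)
    (hT : ∀ l ω, T l ω = sInf {i | ((Finset.range i).image (fun j => X j ω)).card = l}) :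
    μ {ω | ∃ l : ℕ, 1 ≤ l ∧ l ≤ n - 1 ∧
        (4 : ℝ) * l * Real.log (3 * l) < (T (l + 1) ω : ℝ) - (T l ω : ℝ)} ≤ 1 / 3 := by
  have hn0 : n ≠ 0 := by omega
  let m (l : ℕ) : ℕ := ⌊(4 : ℝ) * l * Real.log (3 * l)⌋₊
  let B (l : ℕ) : Set Ω := {ω | ∃ t, ((Finset.range t).image fun i => X i ω).card = l ∧
    (∀ j < t, ((Finset.range j).image fun i => X i ω).card ≠ l) ∧
    ∀ j < m l, X (t + j) ω ∈ (Finset.range t).image fun i => X i ω}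
  calc _ ≤ μ (⋃ l ∈ Finset.Ico 1 n, B l) := by
        refine measure_mono fun ω ⟨l, hl, hln, h⟩ => ?_
        refine Set.mem_biUnion (Finset.mem_coe.2 (Finset.mem_Ico.2 ⟨hl, by omega⟩))
          (exists_first_time_and_repeat (fun i => X i ω) ?_)
        rw [← hT, ← hT]
        have hl0 : (1 : ℝ) ≤ l := by exact_mod_cast hl
        have hnonneg : 0 ≤ (4 : ℝ) * l * Real.log (3 * l) :=
          mul_nonneg (by positivity) (Real.log_nonneg (by linarith))
        have hfloor : (m l : ℝ) ≤ (4 : ℝ) * l * Real.log (3 * l) := Nat.floor_le hnonneg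
        have : (T l ω : ℝ) + m l < T (l + 1) ω := by linarith
        exact_mod_cast this
    _ ≤ ∑ l ∈ Finset.Ico 1 n, μ (B l) := measure_biUnion_finset_le _ _
    _ ≤ ∑ l ∈ Finset.Ico 1 n, ENNReal.ofReal (((l : ℝ) / n) ^ m l) := by
        refine Finset.sum_le_sum fun l _ => ?_
        refine (measure_exists_first_time_and_repeat_le hn0 hcard hlaw l (m l)).trans_eq ?_
        rw [ENNReal.ofReal_pow (by positivity), ENNReal.ofReal_div_of_pos (by positivity),
          ENNReal.ofReal_natCast, ENNReal.ofReal_natCast, div_eq_mul_inv]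
    _ = ENNReal.ofReal (∑ l ∈ Finset.Ico 1 n, ((l : ℝ) / n) ^ m l) :=
        (ENNReal.ofReal_sum_of_nonneg fun _ _ => by positivity).symm
    _ ≤ ENNReal.ofReal (1 / 3) := ENNReal.ofReal_le_ofReal (sum_div_pow_floor_le hn0)
    _ = 1 / 3 := by rw [ENNReal.ofReal_div_of_pos (by norm_num)]; simp
end
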